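/- arXiv:1701.06096 — 2 statements merged into one kernel-verified Lean document; each statement's English description precedes it below -/
import Mathlib

section
/- Theorem A.1, strong duality part: the problem (LinearP) has a finite optimal value (the infimum of its objective over primal feasible solutions is a real number) if and only if (LinearD) has a finite optimal value (the supremum of its objective over dual feasible solutions is a real number), and in that case the two optimal values coincide. -/
open Matrix
open scoped BigOperators Classical

/-- Conditional value-at-risk at confidence level `α` of a random variable with
realizations `v s` and probabilities `p s` on a finite space. -/
noncomputable def CVaR {ι : Type*} [Fintype ι] (α : ℝ) (p v : ι → ℝ) : ℝ :=
  sInf {r : ℝ | ∃ η : ℝ, r = η + (1 - α)⁻¹ * ∑ s, p s * max (v s - η) 0}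

/-- Value-at-risk at confidence level `α`: the minimal `η` with `P(V ≤ η) ≥ α`
(stated as an infimum; the minimum exists for finitely many realizations). -/
noncomputable def VaR {ι : Type*} [Fintype ι] (α : ℝ) (p v : ι → ℝ) : ℝ :=
  sInf {η : ℝ | α ≤ ∑ s, if v s ≤ η then p s else 0}

/-- The scenario-`s` realization `ĝ_s(x,y_s) = ḡ_s x + g̃_s y_s` of the random
outcome vector `Ĝ(x,y)`. -/
noncomputable def Ghat {m n1 n2 d : ℕ} (gbar : Fin m → Matrix (Fin d) (Fin n1) ℝ)
    (gtil : Fin m → Matrix (Fin d) (Fin n2) ℝ)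
    (x : Fin n1 → ℝ) (y : Fin m → Fin n2 → ℝ) (s : Fin m) : Fin d → ℝ :=
  (gbar s).mulVec x + (gtil s).mulVec (y s)

/-- `x ∈ X` and `y_s ∈ Y(x,s)` for every scenario `s`. -/
def InXY {m m1 m2 n1 n2 : ℕ} (A : Matrix (Fin m1) (Fin n1) ℝ) (b : Fin m1 → ℝ)
    (Tm : Fin m → Matrix (Fin m2) (Fin n1) ℝ)
    (Wm : Fin m → Matrix (Fin m2) (Fin n2) ℝ)
    (hvec : Fin m → Fin m2 → ℝ) (x : Fin n1 → ℝ) (y : Fin m → Fin n2 → ℝ) : Prop :=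
  (∀ i, 0 ≤ x i) ∧ (∀ i, A.mulVec x i ≤ b i) ∧
    ∀ s, (∀ j, 0 ≤ y s j) ∧ ∀ i, hvec s i ≤ ((Tm s).mulVec x + (Wm s).mulVec (y s)) i

/-- Feasibility for problem (LinearP). -/
def PrimalFeas {m m1 m2 n1 n2 d τ : ℕ} (α : ℝ) (p : Fin m → ℝ)
    (A : Matrix (Fin m1) (Fin n1) ℝ) (b : Fin m1 → ℝ)
    (Tm : Fin m → Matrix (Fin m2) (Fin n1) ℝ)
    (Wm : Fin m → Matrix (Fin m2) (Fin n2) ℝ)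
    (hvec : Fin m → Fin m2 → ℝ)
    (gbar : Fin m → Matrix (Fin d) (Fin n1) ℝ)
    (gtil : Fin m → Matrix (Fin d) (Fin n2) ℝ)
    (z : Fin τ → Fin d → ℝ) (pt : Fin τ → ℝ) (C : Set (Fin d → ℝ))
    (x : Fin n1 → ℝ) (y : Fin m → Fin n2 → ℝ) : Prop :=
  InXY A b Tm Wm hvec x y ∧
    ∀ c ∈ C, CVaR α p (fun s => c ⬝ᵥ Ghat gbar gtil x y s)
      ≤ CVaR α pt (fun i => c ⬝ᵥ z i)

/-- Objective function of problem (LinearP). -/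
noncomputable def PrimalObj {m n1 n2 : ℕ} (p : Fin m → ℝ) (fv : Fin n1 → ℝ)
    (q : Fin m → Fin n2 → ℝ) (x : Fin n1 → ℝ) (y : Fin m → Fin n2 → ℝ) : ℝ :=
  fv ⬝ᵥ x + ∑ s, p s * (q s ⬝ᵥ y s)

/-- Feasibility for the dual problem (LinearD), with the finitely supported
measures `μ` and `ν_s` represented by common support points `c k` and weights
`mw k` and `nw s k` (`k ∈ Fin K`). -/
def DualFeas {m m1 m2 n1 n2 d K : ℕ} (α : ℝ) (p : Fin m → ℝ)
    (A : Matrix (Fin m1) (Fin n1) ℝ) (fv : Fin n1 → ℝ)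
    (Tm : Fin m → Matrix (Fin m2) (Fin n1) ℝ)
    (Wm : Fin m → Matrix (Fin m2) (Fin n2) ℝ)
    (q : Fin m → Fin n2 → ℝ)
    (gbar : Fin m → Matrix (Fin d) (Fin n1) ℝ)
    (gtil : Fin m → Matrix (Fin d) (Fin n2) ℝ)
    (C : Set (Fin d → ℝ))
    (c : Fin K → Fin d → ℝ) (mw : Fin K → ℝ) (nw : Fin m → Fin K → ℝ)
    (lam : Fin m1 → ℝ) (piv : Fin m → Fin m2 → ℝ) : Prop :=
  (∀ k, c k ∈ C) ∧ (∀ k, 0 ≤ mw k) ∧ (∀ s k, 0 ≤ nw s k) ∧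
    (∀ i, 0 ≤ lam i) ∧ (∀ s i, 0 ≤ piv s i) ∧
    (∀ k, ∑ s, p s * nw s k = mw k) ∧
    (∀ s k, nw s k ≤ mw k / (1 - α)) ∧
    (∀ j, ∑ s, p s * (Matrix.vecMul (piv s) (Tm s) j
        - ∑ k, nw s k * Matrix.vecMul (c k) (gbar s) j)
      ≤ fv j + Matrix.vecMul lam A j) ∧
    ∀ s j, Matrix.vecMul (piv s) (Wm s) j
        - ∑ k, nw s k * Matrix.vecMul (c k) (gtil s) j ≤ q s j

/-- Objective function of the dual problem (LinearD). -/
noncomputable def DualObj {m m1 m2 d τ K : ℕ} (α : ℝ) (p : Fin m → ℝ)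
    (b : Fin m1 → ℝ) (hvec : Fin m → Fin m2 → ℝ)
    (z : Fin τ → Fin d → ℝ) (pt : Fin τ → ℝ)
    (c : Fin K → Fin d → ℝ) (mw : Fin K → ℝ)
    (lam : Fin m1 → ℝ) (piv : Fin m → Fin m2 → ℝ) : ℝ :=
  -(∑ k, mw k * CVaR α pt (fun i => c k ⬝ᵥ z i)) - lam ⬝ᵥ b
    + ∑ s, p s * (piv s ⬝ᵥ hvec s)


lemma aux_farkas {ι : Type*} (s : Finset ι) :
    ∀ {V : Type} [AddCommGroup V] [Module ℝ V] (a : ι → V →ₗ[ℝ] ℝ) (φ : V →ₗ[ℝ] ℝ),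
    (∀ x, (∀ i ∈ s, 0 ≤ a i x) → 0 ≤ φ x) →
    ∃ y : ι → ℝ, (∀ i, 0 ≤ y i) ∧ ∀ x, φ x = ∑ i ∈ s, y i * a i x := by
  induction s using Finset.induction_on with
  | empty =>
    intro V _ _ a φ h
    refine ⟨fun _ => 0, fun _ => le_rfl, fun x => ?_⟩
    have h1 := h x (by simp)
    have h2 := h (-x) (by simp)
    simp at h2 ⊢
    linarith
  | insert n s hn ih =>
    intro V _ _ a φ h
    by_cases hc : ∀ x, (∀ i ∈ s, 0 ≤ a i x) → 0 ≤ φ x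
    · obtain ⟨y, hy, hyx⟩ := ih a φ hc
      refine ⟨fun i => if i = n then 0 else y i, fun i => by dsimp only; split_ifs; exacts [le_rfl, hy i], fun x => ?_⟩
      rw [Finset.sum_insert hn, hyx x]
      simp only [if_true, zero_mul, zero_add]
      refine Finset.sum_congr rfl fun i hi => ?_
      rw [if_neg (by rintro rfl; exact hn hi)]
    · push Not at hc
      obtain ⟨x1, hx1, hφ1⟩ := hc
      have hneg : a n x1 < 0 := by
        by_contra hge
        push Not at hge
        have := h x1 (by
          intro i hi
          rcases Finset.mem_insert.1 hi with rfl | hi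
          · exact hge
          · exact hx1 i hi)
        linarith
      obtain ⟨x0, hx0, hφ0, hn0⟩ : ∃ x0, (∀ i ∈ s, 0 ≤ a i x0) ∧ φ x0 < 0 ∧ a n x0 = -1 := by
        have hpos : 0 < (-(a n x1))⁻¹ := by
          apply inv_pos.2; linarith
        refine ⟨(-(a n x1))⁻¹ • x1, fun i hi => ?_, ?_, ?_⟩
        · simp only [map_smul, smul_eq_mul]
          exact mul_nonneg hpos.le (hx1 i hi)
        · simp only [map_smul, smul_eq_mul]
          exact mul_neg_of_pos_of_neg hpos hφ1
        · simp only [map_smul, smul_eq_mul]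
          have : a n x1 ≠ 0 := hneg.ne
          field_simp
      let P : V →ₗ[ℝ] V := LinearMap.id + (a n).smulRight x0
      have hP : ∀ x, P x = x + a n x • x0 := fun x => by simp [P]
      obtain ⟨y, hy, hyx⟩ := ih (fun i => (a i).comp P) (φ.comp P) (by
        intro x hx
        apply h (P x)
        intro i hi
        rcases Finset.mem_insert.1 hi with rfl | hi
        · rw [hP]; simp [hn0]
        · exact hx i hi)
      refine ⟨fun i => if i = n then (∑ i ∈ s, y i * a i x0) - φ x0 else y i, fun i => ?_, fun x => ?_⟩
      · dsimp only
        split_ifs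
        · have : 0 ≤ ∑ i ∈ s, y i * a i x0 := Finset.sum_nonneg fun i hi => mul_nonneg (hy i) (hx0 i hi)
          linarith
        · exact hy i
      · rw [Finset.sum_insert hn]
        have h1 := hyx x
        simp only [LinearMap.comp_apply, hP, map_add, map_smul, smul_eq_mul] at h1
        have h2 : ∑ i ∈ s, (if i = n then (∑ i ∈ s, y i * a i x0) - φ x0 else y i) * a i x
            = ∑ i ∈ s, y i * a i x := by
          refine Finset.sum_congr rfl fun i hi => ?_
          rw [if_neg (by rintro rfl; exact hn hi)]
        rw [h2]
        simp only [if_true]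
        have h3 : ∑ i ∈ s, y i * (a i x + a n x * a i x0)
            = ∑ i ∈ s, y i * a i x + a n x * ∑ i ∈ s, y i * a i x0 := by
          rw [Finset.mul_sum, ← Finset.sum_add_distrib]
          exact Finset.sum_congr rfl fun i _ => by ring
        rw [h3] at h1
        linarith

lemma aux_lp {ι : Type} [Fintype ι] {V : Type} [AddCommGroup V] [Module ℝ V]
    (a : ι → V →ₗ[ℝ] ℝ) (b : ι → ℝ) (φ : V →ₗ[ℝ] ℝ) (w : ℝ)
    (h : ∀ x, (∀ i, b i ≤ a i x) → w < φ x) :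
    ∃ (y : ι → ℝ) (r : ℝ), (∀ i, 0 ≤ y i) ∧ 0 ≤ r ∧ (∀ x, ∑ i, y i * a i x = r * φ x) ∧
      r * w < ∑ i, y i * b i := by
  let a' : Option ι → (V × ℝ) →ₗ[ℝ] ℝ := fun o => match o with
    | none => w • LinearMap.snd ℝ V ℝ - φ.comp (LinearMap.fst ℝ V ℝ)
    | some i => (a i).comp (LinearMap.fst ℝ V ℝ) - b i • LinearMap.snd ℝ V ℝ
  obtain ⟨y, hy, hyx⟩ := aux_farkas (Finset.univ : Finset (Option ι)) a' (-LinearMap.snd ℝ V ℝ) (by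
    rintro ⟨x, t⟩ hx
    by_contra hneg
    simp only [LinearMap.neg_apply, LinearMap.snd_apply] at hneg
    have ht : 0 < t := by linarith
    have h1 := h (t⁻¹ • x) (by
      intro i
      have := hx (some i) (Finset.mem_univ _)
      simp [a'] at this
      rw [map_smul, smul_eq_mul, ← div_eq_inv_mul, le_div_iff₀ ht]
      exact this)
    have h2 := hx none (Finset.mem_univ _)
    simp [a'] at h2
    rw [map_smul, smul_eq_mul, ← div_eq_inv_mul, lt_div_iff₀ ht] at h1
    linarith)
  refine ⟨fun i => y (some i), y none, fun i => hy _, hy _, fun x => ?_, ?_⟩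
  · have := hyx (x, 0)
    simp [a', Fintype.sum_option] at this
    linarith
  · have := hyx (0, 1)
    simp [a', Fintype.sum_option] at this
    linarith

/-- crossing point -/
noncomputable def crossPt {E : Type} [AddCommGroup E] [Module ℝ E] (l : E →ₗ[ℝ] ℝ) (u v : E) : E :=
  (l u - l v)⁻¹ • ((-(l v)) • u + (l u) • v)

lemma aux_cross {E : Type} [AddCommGroup E] [Module ℝ E] (l : E →ₗ[ℝ] ℝ) (G : Finset E) (c : E)
    (hc : c ∈ convexHull ℝ (G : Set E)) (hl : 0 ≤ l c) :
    c ∈ convexHull ℝ ({u | u ∈ G ∧ 0 ≤ l u} ∪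
      {x | ∃ u ∈ G, ∃ v ∈ G, 0 ≤ l u ∧ l v < 0 ∧ x = crossPt l u v}) := by
  obtain ⟨w, hw, hw1, hwc⟩ := Finset.mem_convexHull'.1 hc
  set Q := ({u | u ∈ G ∧ 0 ≤ l u} ∪
      {x | ∃ u ∈ G, ∃ v ∈ G, 0 ≤ l u ∧ l v < 0 ∧ x = crossPt l u v}) with hQ
  set P := G.filter (fun u => 0 ≤ l u) with hPdef
  set N := G.filter (fun u => ¬ 0 ≤ l u) with hNdef
  have hsplit : ∀ {M : Type} [AddCommMonoid M] (f : E → M), ∑ u ∈ G, f u = ∑ u ∈ P, f u + ∑ u ∈ N, f u :=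
    fun f => (Finset.sum_filter_add_sum_filter_not G _ f).symm
  have hlc : l c = ∑ u ∈ P, w u * l u + ∑ u ∈ N, w u * l u := by
    rw [← hsplit, ← hwc, map_sum]; simp
  set S := ∑ u ∈ P, w u * l u with hS
  set T := ∑ v ∈ N, w v * (- l v) with hT
  have hTS : T ≤ S := by
    have : T = - ∑ u ∈ N, w u * l u := by simp [hT]
    linarith
  have hmP : ∀ u ∈ P, u ∈ G ∧ 0 ≤ l u := fun u hu => Finset.mem_filter.1 hu
  have hmN : ∀ u ∈ N, u ∈ G ∧ l u < 0 := fun u hu => ⟨(Finset.mem_filter.1 hu).1, not_le.1 (Finset.mem_filter.1 hu).2⟩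
  have hT0 : 0 ≤ T := Finset.sum_nonneg fun v hv => mul_nonneg (hw v (hmN v hv).1) (by linarith [(hmN v hv).2])
  rcases hT0.eq_or_lt with hT0 | hT0
  · have hz : ∀ v ∈ N, w v = 0 := by
      intro v hv
      have := (Finset.sum_eq_zero_iff_of_nonneg (fun v hv => mul_nonneg (hw v (hmN v hv).1) (by linarith [(hmN v hv).2]))).1 hT0.symm v hv
      rcases mul_eq_zero.1 this with h | h
      · exact h
      · linarith [(hmN v hv).2]
    rw [hsplit] at hw1 hwc
    rw [Finset.sum_eq_zero hz, add_zero] at hw1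
    rw [Finset.sum_eq_zero (s := N) (fun v hv => by rw [hz v hv, zero_smul]), add_zero] at hwc
    rw [← hwc]
    refine (convex_convexHull ℝ Q).sum_mem (fun u hu => hw u (hmP u hu).1) hw1 fun u hu => ?_
    exact subset_convexHull ℝ Q (Or.inl (hmP u hu))
  · have hSpos : 0 < S := lt_of_lt_of_le hT0 hTS
    have key : ∀ {M : Type} [AddCommGroup M] [Module ℝ M] (f : E → M),
        ∑ uv ∈ P ×ˢ N, (w uv.1 * w uv.2 / S) • ((-(l uv.2)) • f uv.1 + (l uv.1) • f uv.2)
          + ∑ u ∈ P, (w u * (1 - T / S)) • f u = ∑ u ∈ G, w u • f u := by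
      intro M _ _ f
      rw [hsplit, Finset.sum_product]
      simp only [smul_add, Finset.sum_add_distrib, smul_smul]
      have e1 : ∑ u ∈ P, ∑ v ∈ N, (w u * w v / S * -(l v)) • f u = ∑ u ∈ P, (w u * (T / S)) • f u := by
        refine Finset.sum_congr rfl fun u _ => ?_
        rw [← Finset.sum_smul]
        congr 1
        rw [hT, Finset.sum_div, Finset.mul_sum]
        exact Finset.sum_congr rfl fun v _ => by ring
      have e2 : ∑ u ∈ P, ∑ v ∈ N, (w u * w v / S * (l u)) • f v = ∑ v ∈ N, w v • f v := by
        rw [Finset.sum_comm]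
        refine Finset.sum_congr rfl fun v _ => ?_
        rw [← Finset.sum_smul]
        congr 1
        have : ∑ u ∈ P, w u * w v / S * (l u) = w v / S * S := by
          rw [hS, Finset.mul_sum]
          exact Finset.sum_congr rfl fun v _ => by ring
        rw [this]; field_simp
      rw [e1, e2, add_right_comm, ← Finset.sum_add_distrib]
      congr 1
      refine Finset.sum_congr rfl fun u _ => ?_
      rw [← add_smul]; congr 1; ring
    have k1 := key (fun _ => (1 : ℝ))
    have k2 := key (fun u => u)
    simp only [smul_eq_mul, mul_one] at k1
    rw [hw1] at k1
    rw [hwc] at k2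
    have hTS1 : T / S ≤ 1 := (div_le_one hSpos).2 hTS
    let wt : (E × E) ⊕ E → ℝ := Sum.elim (fun uv => (w uv.1 * w uv.2 / S) * (-(l uv.2) + l uv.1)) (fun u => w u * (1 - T / S))
    let pt : (E × E) ⊕ E → E := Sum.elim (fun uv => crossPt l uv.1 uv.2) id
    have : ∑ i ∈ (P ×ˢ N).disjSum P, wt i • pt i ∈ convexHull ℝ Q := by
      refine (convex_convexHull ℝ Q).sum_mem ?_ ?_ ?_
      · rintro (⟨u, v⟩ | u) hi
        · rw [Finset.inl_mem_disjSum, Finset.mem_product] at hi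
          have h1 := hmP _ hi.1
          have h2 := hmN _ hi.2
          exact mul_nonneg (div_nonneg (mul_nonneg (hw _ h1.1) (hw _ h2.1)) hSpos.le) (by dsimp only at *; linarith [h1.2, h2.2])
        · rw [Finset.inr_mem_disjSum] at hi
          exact mul_nonneg (hw _ (hmP _ hi).1) (by linarith)
      · rw [Finset.sum_disjSum]
        exact k1
      · rintro (⟨u, v⟩ | u) hi
        · rw [Finset.inl_mem_disjSum, Finset.mem_product] at hi
          have h1 := hmP _ hi.1
          have h2 := hmN _ hi.2
          exact subset_convexHull ℝ Q (Or.inr ⟨u, h1.1, v, h2.1, h1.2, h2.2, rfl⟩)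
        · rw [Finset.inr_mem_disjSum] at hi
          exact subset_convexHull ℝ Q (Or.inl (hmP _ hi))
    rw [Finset.sum_disjSum] at this
    convert this using 1
    rw [← k2]
    congr 1
    refine Finset.sum_congr rfl fun uv hi => ?_
    rw [Finset.mem_product] at hi
    have h1 := hmP _ hi.1
    have h2 := hmN _ hi.2
    have h3 : l uv.1 - l uv.2 ≠ 0 := by linarith [h1.2, h2.2]
    simp only [wt, pt, Sum.elim_inl, crossPt]
    rw [smul_smul]
    congr 1
    field_simp
    ring

lemma crossPt_mem {E : Type} [AddCommGroup E] [Module ℝ E] (l : E →ₗ[ℝ] ℝ) (u v : E) (s : Set E)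
    (hs : Convex ℝ s) (hu : u ∈ s) (hv : v ∈ s) (h1 : 0 ≤ l u) (h2 : l v < 0) : crossPt l u v ∈ s := by
  have hp : 0 < l u - l v := by linarith
  rw [crossPt, smul_add, smul_smul, smul_smul]
  refine hs hu hv (mul_nonneg (inv_nonneg.2 hp.le) (by linarith)) (mul_nonneg (inv_nonneg.2 hp.le) h1) ?_
  field_simp
  ring

lemma crossPt_zero {E : Type} [AddCommGroup E] [Module ℝ E] (l : E →ₗ[ℝ] ℝ) (u v : E) : l (crossPt l u v) = 0 := by
  simp only [crossPt, map_smul, map_add, smul_eq_mul]; ring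

/-- finite subdivision of a polytope compatible with the signs of finitely many functionals -/
lemma aux_subdiv {E : Type} [AddCommGroup E] [Module ℝ E] (F : Finset E) (L : Finset (E →ₗ[ℝ] ℝ)) :
    ∃ F' : Finset E, (F' : Set E) ⊆ convexHull ℝ (F : Set E) ∧
      ∀ c ∈ convexHull ℝ (F : Set E), ∃ G ⊆ F', c ∈ convexHull ℝ (G : Set E) ∧
        ∀ l ∈ L, (∀ u ∈ G, 0 ≤ l u) ∨ (∀ u ∈ G, l u ≤ 0) := by
  induction L using Finset.induction_on with
  | empty => exact ⟨F, subset_convexHull ℝ _, fun c hc => ⟨F, subset_rfl, hc, by simp⟩⟩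
  | insert l L hl ih =>
    obtain ⟨F', hF', hsub⟩ := ih
    let X : (E →ₗ[ℝ] ℝ) → Finset E → Finset E := fun l G =>
      G.filter (fun u => 0 ≤ l u) ∪
        ((G.filter (fun u => 0 ≤ l u)) ×ˢ (G.filter (fun u => l u < 0))).image (fun uv => crossPt l uv.1 uv.2)
    have hXc : ∀ (l : E →ₗ[ℝ] ℝ) G, (X l G : Set E) = ({u | u ∈ G ∧ 0 ≤ l u} ∪
      {x | ∃ u ∈ G, ∃ v ∈ G, 0 ≤ l u ∧ l v < 0 ∧ x = crossPt l u v}) := by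
      intro l G
      ext x
      simp only [X, Finset.coe_union, Finset.coe_filter, Finset.coe_image, Set.mem_union, Set.mem_ofPred_eq, Set.mem_image, Finset.mem_coe, Finset.mem_product, Finset.mem_filter, Prod.exists]
      constructor
      · rintro (h | ⟨u, v, ⟨⟨h1, h2⟩, h3, h4⟩, rfl⟩)
        · exact Or.inl h
        · exact Or.inr ⟨u, h1, v, h3, h2, h4, rfl⟩
      · rintro (h | ⟨u, h1, v, h3, h2, h4, rfl⟩)
        · exact Or.inl h
        · exact Or.inr ⟨u, v, ⟨⟨h1, h2⟩, h3, h4⟩, rfl⟩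
    have hXconv : ∀ (l : E →ₗ[ℝ] ℝ) (G : Finset E) (s : Set E), Convex ℝ s → (G : Set E) ⊆ s → (X l G : Set E) ⊆ s := by
      intro l G s hs hG x hx
      rw [hXc] at hx
      rcases hx with h | ⟨u, h1, v, h3, h2, h4, rfl⟩
      · exact hG h.1
      · exact crossPt_mem l u v s hs (hG h1) (hG h3) h2 h4
    have hXmono : ∀ (l : E →ₗ[ℝ] ℝ) (G G' : Finset E), G ⊆ G' → X l G ⊆ X l G' := by
      intro l G G' h x hx
      rw [← Finset.mem_coe, hXc] at hx ⊢
      rcases hx with h' | ⟨u, h1, v, h3, h2, h4, rfl⟩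
      · exact Or.inl ⟨h h'.1, h'.2⟩
      · exact Or.inr ⟨u, h h1, v, h h3, h2, h4, rfl⟩
    have hXpos : ∀ (l : E →ₗ[ℝ] ℝ) (G : Finset E), ∀ x ∈ X l G, 0 ≤ l x := by
      intro l G x hx
      rw [← Finset.mem_coe, hXc] at hx
      rcases hx with h' | ⟨u, h1, v, h3, h2, h4, rfl⟩
      · exact h'.2
      · exact (crossPt_zero l u v).ge
    have hXsign : ∀ (l l' : E →ₗ[ℝ] ℝ) (G : Finset E), ((∀ u ∈ G, 0 ≤ l' u) ∨ (∀ u ∈ G, l' u ≤ 0)) →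
        ((∀ u ∈ X l G, 0 ≤ l' u) ∨ (∀ u ∈ X l G, l' u ≤ 0)) := by
      intro l l' G h
      rcases h with h | h
      · exact Or.inl (hXconv l G {x | 0 ≤ l' x} (convex_halfSpace_ge l'.isLinear 0) h)
      · exact Or.inr (hXconv l G {x | l' x ≤ 0} (convex_halfSpace_le l'.isLinear 0) h)
    refine ⟨X l F' ∪ X (-l) F', ?_, ?_⟩
    · rw [Finset.coe_union]
      exact Set.union_subset (hXconv _ _ _ (convex_convexHull ℝ _) hF') (hXconv _ _ _ (convex_convexHull ℝ _) hF')
    · intro c hc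
      obtain ⟨G, hG, hcG, hs⟩ := hsub c hc
      rcases le_total 0 (l c) with h0 | h0
      · refine ⟨X l G, (hXmono l G F' hG).trans Finset.subset_union_left, ?_, ?_⟩
        · rw [hXc]; exact aux_cross l G c hcG h0
        · intro l' hl'
          rcases Finset.mem_insert.1 hl' with rfl | hl'
          · exact Or.inl (hXpos _ G)
          · exact hXsign _ _ _ (hs l' hl')
      · refine ⟨X (-l) G, (hXmono (-l) G F' hG).trans Finset.subset_union_right, ?_, ?_⟩
        · rw [hXc]; exact aux_cross (-l) G c hcG (by simpa using h0)
        · intro l' hl'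
          rcases Finset.mem_insert.1 hl' with rfl | hl'
          · refine Or.inr fun u hu => ?_
            have := hXpos _ G u hu
            simpa using this
          · exact hXsign _ _ _ (hs l' hl')

lemma cvar_attained {ι : Type} [Fintype ι] (α : ℝ) (p v : ι → ℝ) (hα0 : 0 ≤ α) (hα1 : α < 1)
    (hp : ∀ s, 0 < p s) (hp1 : ∑ s, p s = 1) :
    (∃ i, CVaR α p v = v i + (1 - α)⁻¹ * ∑ s, p s * max (v s - v i) 0) ∧
      ∀ η, CVaR α p v ≤ η + (1 - α)⁻¹ * ∑ s, p s * max (v s - η) 0 := by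
  have hne : Nonempty ι := by
    by_contra h
    rw [not_nonempty_iff] at h
    simp at hp1
  set H : ℝ → ℝ := fun η => η + (1 - α)⁻¹ * ∑ s, p s * max (v s - η) 0 with hH
  have hi : 1 ≤ (1 - α)⁻¹ := (one_le_inv₀ (by linarith)).2 (by linarith)
  have h1 : ∀ η, ∃ j, H (v j) ≤ H η := by
    intro η
    by_cases hup : ∃ j, η ≤ v j
    · by_cases hlo : ∃ j, v j ≤ η
      · obtain ⟨jb, hjb, hb⟩ := Finset.exists_min_image (Finset.univ.filter (fun j => η ≤ v j)) v
          (by obtain ⟨j, hj⟩ := hup; exact ⟨j, by simpa using hj⟩)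
        obtain ⟨ja, hja, ha⟩ := Finset.exists_max_image (Finset.univ.filter (fun j => v j ≤ η)) v
          (by obtain ⟨j, hj⟩ := hlo; exact ⟨j, by simpa using hj⟩)
        simp only [Finset.mem_filter, Finset.mem_univ, true_and] at hjb hb hja ha
        rcases (hja.trans hjb).eq_or_lt with hab | hab
        · have : v ja = η := by linarith
          exact ⟨ja, by rw [this]⟩
        -- convex combination
        obtain ⟨t, ht0, ht1, hte⟩ : ∃ t : ℝ, 0 ≤ t ∧ t ≤ 1 ∧ η = (1 - t) * v ja + t * v jb := by
          have hd : 0 < v jb - v ja := by linarith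
          refine ⟨(η - v ja) / (v jb - v ja), div_nonneg (by linarith) hd.le, (div_le_one hd).2 (by linarith), ?_⟩
          field_simp
          ring
        have hterm : ∀ s, max (v s - η) 0 = (1 - t) * max (v s - v ja) 0 + t * max (v s - v jb) 0 := by
          intro s
          rcases le_total η (v s) with h | h
          · have := hb s h
            rw [max_eq_left (by linarith), max_eq_left (by linarith), max_eq_left (by linarith), hte]
            ring
          · have := ha s h
            rw [max_eq_right (by linarith), max_eq_right (by linarith), max_eq_right (by linarith)]
            ring
        have hcomb : H η = (1 - t) * H (v ja) + t * H (v jb) := by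
          simp only [hH]
          have : ∑ s, p s * max (v s - η) 0 = (1 - t) * (∑ s, p s * max (v s - v ja) 0)
              + t * ∑ s, p s * max (v s - v jb) 0 := by
            rw [Finset.mul_sum, Finset.mul_sum, ← Finset.sum_add_distrib]
            exact Finset.sum_congr rfl fun s _ => by rw [hterm s]; ring
          rw [this]
          linear_combination hte
        rcases le_total (H (v ja)) (H (v jb)) with h | h
        · exact ⟨ja, by rw [hcomb]; nlinarith⟩
        · exact ⟨jb, by rw [hcomb]; nlinarith⟩
      · push Not at hlo
        obtain ⟨j, hj⟩ := Finite.exists_min v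
        refine ⟨j, ?_⟩
        have e : ∀ x, x ≤ v j → H x = x + (1 - α)⁻¹ * ((∑ s, p s * v s) - x) := by
          intro x hx
          simp only [hH]
          congr 2
          have : x = ∑ s, p s * x := by rw [← Finset.sum_mul, hp1, one_mul]
          conv_rhs => rw [this]
          rw [← Finset.sum_sub_distrib]
          refine Finset.sum_congr rfl fun s _ => ?_
          rw [max_eq_left (by linarith [hj s])]; ring
        rw [e _ le_rfl, e η (hlo j).le]
        nlinarith [hlo j]
    · push Not at hup
      obtain ⟨j, hj⟩ := Finite.exists_max v
      refine ⟨j, ?_⟩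
      have e : ∀ x, v j ≤ x → H x = x := by
        intro x hx
        simp only [hH]
        rw [Finset.sum_eq_zero, mul_zero, add_zero]
        intro s _
        rw [max_eq_right (by linarith [hj s]), mul_zero]
      rw [e _ le_rfl, e η (hup j).le]
      exact (hup j).le
  obtain ⟨i, hi⟩ := Finite.exists_min (fun i => H (v i))
  have hle : ∀ η, H (v i) ≤ H η := fun η => by
    obtain ⟨j, hj⟩ := h1 η
    exact (hi j).trans hj
  have : CVaR α p v = H (v i) := by
    refine IsLeast.csInf_eq ⟨⟨v i, rfl⟩, ?_⟩
    rintro r ⟨η, rfl⟩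
    exact hle η
  exact ⟨⟨i, this⟩, fun η => this ▸ hle η⟩

lemma cvar_convex {ι E : Type} [Fintype ι] (α : ℝ) (p : ι → ℝ) (hα0 : 0 ≤ α) (hα1 : α < 1)
    (hp : ∀ s, 0 < p s) (hp1 : ∑ s, p s = 1) (G : Finset E) (w : E → ℝ) (hw : ∀ u ∈ G, 0 ≤ w u)
    (v : E → ι → ℝ) :
    CVaR α p (fun s => ∑ u ∈ G, w u * v u s) ≤ ∑ u ∈ G, w u * CVaR α p (v u) := by
  have hpos : 0 ≤ (1 - α)⁻¹ := inv_nonneg.2 (by linarith)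
  choose i hi using fun u => (cvar_attained α p (v u) hα0 hα1 hp hp1).1
  refine ((cvar_attained α p _ hα0 hα1 hp hp1).2 (∑ u ∈ G, w u * v u (i u))).trans ?_
  have : ∑ u ∈ G, w u * CVaR α p (v u) = ∑ u ∈ G, w u * v u (i u) +
      (1 - α)⁻¹ * ∑ s, p s * ∑ u ∈ G, w u * max (v u s - v u (i u)) 0 := by
    simp only [Finset.mul_sum]
    rw [Finset.sum_comm, ← Finset.sum_add_distrib]
    refine Finset.sum_congr rfl fun u _ => ?_
    rw [hi u, mul_add, Finset.mul_sum, Finset.mul_sum]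
    congr 1
    exact Finset.sum_congr rfl fun s _ => by ring
  rw [this]
  gcongr with s _
  · exact (hp s).le
  refine max_le ?_ (Finset.sum_nonneg fun u hu => mul_nonneg (hw u hu) (le_max_right _ _))
  rw [← Finset.sum_sub_distrib]
  refine Finset.sum_le_sum fun u hu => ?_
  rw [← mul_sub]
  exact mul_le_mul_of_nonneg_left (le_max_left _ _) (hw u hu)

lemma cvar_comonotone {ι E : Type} [Fintype ι] (α : ℝ) (p : ι → ℝ) (hα0 : 0 ≤ α) (hα1 : α < 1)
    (hp : ∀ s, 0 < p s) (hp1 : ∑ s, p s = 1) (G : Finset E) (w : E → ℝ) (hw : ∀ u ∈ G, 0 ≤ w u)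
    (v : E → ι → ℝ)
    (hco : ∀ i j, (∀ u ∈ G, 0 ≤ v u i - v u j) ∨ (∀ u ∈ G, v u i - v u j ≤ 0)) :
    ∑ u ∈ G, w u * CVaR α p (v u) ≤ CVaR α p (fun s => ∑ u ∈ G, w u * v u s) := by
  obtain ⟨i, hi⟩ := (cvar_attained α p (fun s => ∑ u ∈ G, w u * v u s) hα0 hα1 hp hp1).1
  rw [hi]
  have hm : ∀ s, max (∑ u ∈ G, w u * v u s - ∑ u ∈ G, w u * v u i) 0
      = ∑ u ∈ G, w u * max (v u s - v u i) 0 := by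
    intro s
    rw [← Finset.sum_sub_distrib]
    rcases hco s i with h | h
    · rw [max_eq_left]
      · refine Finset.sum_congr rfl fun u hu => ?_
        rw [max_eq_left (h u hu)]; ring
      · refine Finset.sum_nonneg fun u hu => ?_
        rw [← mul_sub]
        exact mul_nonneg (hw u hu) (h u hu)
    · rw [max_eq_right]
      · symm
        refine Finset.sum_eq_zero fun u hu => ?_
        rw [max_eq_right (h u hu), mul_zero]
      · refine Finset.sum_nonpos fun u hu => ?_
        rw [← mul_sub]
        exact mul_nonpos_of_nonneg_of_nonpos (hw u hu) (h u hu)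
  simp only [hm]
  have : ∑ u ∈ G, w u * v u i + (1 - α)⁻¹ * ∑ s, p s * ∑ u ∈ G, w u * max (v u s - v u i) 0
      = ∑ u ∈ G, w u * (v u i + (1 - α)⁻¹ * ∑ s, p s * max (v u s - v u i) 0) := by
    simp only [Finset.mul_sum]
    rw [Finset.sum_comm, ← Finset.sum_add_distrib]
    refine Finset.sum_congr rfl fun u _ => ?_
    rw [mul_add, Finset.mul_sum]
    congr 1
    exact Finset.sum_congr rfl fun s _ => by ring
  rw [this]
  exact Finset.sum_le_sum fun u hu => mul_le_mul_of_nonneg_left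
    ((cvar_attained α p (v u) hα0 hα1 hp hp1).2 (v u i)) (hw u hu)

lemma finite_reduction {m d τ : ℕ} (α : ℝ) (hα0 : 0 ≤ α) (hα1 : α < 1)
    (p : Fin m → ℝ) (hp : ∀ s, 0 < p s) (hp1 : ∑ s, p s = 1)
    (z : Fin τ → Fin d → ℝ)
    (pt : Fin τ → ℝ) (hpt : ∀ i, 0 < pt i) (hpt1 : ∑ i, pt i = 1)
    (C : Set (Fin d → ℝ))
    (hCpoly : ∃ F : Finset (Fin d → ℝ), C = convexHull ℝ (F : Set (Fin d → ℝ))) :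
    ∃ F' : Finset (Fin d → ℝ), (F' : Set (Fin d → ℝ)) ⊆ C ∧
      ∀ G : Fin m → Fin d → ℝ,
        (∀ c ∈ F', CVaR α p (fun s => c ⬝ᵥ G s) ≤ CVaR α pt (fun i => c ⬝ᵥ z i)) →
        ∀ c ∈ C, CVaR α p (fun s => c ⬝ᵥ G s) ≤ CVaR α pt (fun i => c ⬝ᵥ z i) := by
  obtain ⟨F, rfl⟩ := hCpoly
  let lf : Fin τ × Fin τ → ((Fin d → ℝ) →ₗ[ℝ] ℝ) := fun ij =>
    IsLinearMap.mk' (fun c => c ⬝ᵥ z ij.1 - c ⬝ᵥ z ij.2)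
      ⟨fun x y => by simp only [add_dotProduct]; ring,
       fun r x => by simp only [smul_dotProduct, smul_eq_mul]; ring⟩
  obtain ⟨F', hF', hsub⟩ := aux_subdiv F (Finset.univ.image lf)
  refine ⟨F', hF', fun G hG c hc => ?_⟩
  obtain ⟨Q, hQ, hcQ, hsign⟩ := hsub c hc
  obtain ⟨w, hw, hw1, hwc⟩ := Finset.mem_convexHull'.1 hcQ
  have hdot : ∀ g : Fin d → ℝ, c ⬝ᵥ g = ∑ u ∈ Q, w u * (u ⬝ᵥ g) := by
    intro g
    rw [← hwc, sum_dotProduct]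
    simp only [smul_dotProduct, smul_eq_mul]
  simp only [hdot]
  refine (cvar_convex α p hα0 hα1 hp hp1 Q w hw (fun u s => u ⬝ᵥ G s)).trans ?_
  refine le_trans ?_ (cvar_comonotone α pt hα0 hα1 hpt hpt1 Q w hw (fun u s => u ⬝ᵥ z s) ?_)
  · exact Finset.sum_le_sum fun u hu => mul_le_mul_of_nonneg_left (hG u (hQ hu)) (hw u hu)
  · intro i j
    exact hsign (lf (i, j)) (Finset.mem_image_of_mem _ (Finset.mem_univ _))

lemma weak_duality {m m1 m2 n1 n2 d τ K : ℕ}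
    (p : Fin m → ℝ) (hp : ∀ s, 0 < p s) (hp1 : ∑ s, p s = 1)
    (α : ℝ) (hα0 : 0 ≤ α) (hα1 : α < 1)
    (A : Matrix (Fin m1) (Fin n1) ℝ) (b : Fin m1 → ℝ) (fv : Fin n1 → ℝ)
    (Tm : Fin m → Matrix (Fin m2) (Fin n1) ℝ)
    (Wm : Fin m → Matrix (Fin m2) (Fin n2) ℝ)
    (q : Fin m → Fin n2 → ℝ) (hvec : Fin m → Fin m2 → ℝ)
    (gbar : Fin m → Matrix (Fin d) (Fin n1) ℝ)
    (gtil : Fin m → Matrix (Fin d) (Fin n2) ℝ)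
    (z : Fin τ → Fin d → ℝ) (pt : Fin τ → ℝ) (C : Set (Fin d → ℝ))
    (x : Fin n1 → ℝ) (y : Fin m → Fin n2 → ℝ)
    (hP : PrimalFeas α p A b Tm Wm hvec gbar gtil z pt C x y)
    (c : Fin K → Fin d → ℝ) (mw : Fin K → ℝ) (nw : Fin m → Fin K → ℝ)
    (lam : Fin m1 → ℝ) (piv : Fin m → Fin m2 → ℝ)
    (hD : DualFeas α p A fv Tm Wm q gbar gtil C c mw nw lam piv) :
    DualObj α p b hvec z pt c mw lam piv ≤ PrimalObj p fv q x y := by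
  obtain ⟨⟨hx, hA, hY⟩, hcv⟩ := hP
  obtain ⟨hc, hmw, hnw, hlam, hpiv, hsum, hbd, hfx, hqy⟩ := hD
  have hg : ∀ k s, c k ⬝ᵥ Ghat gbar gtil x y s
      = (c k ᵥ* gbar s) ⬝ᵥ x + (c k ᵥ* gtil s) ⬝ᵥ y s := by
    intro k s
    simp only [Ghat, dotProduct_add, dotProduct_mulVec]
  have h1 : ∀ k, ∑ s, p s * (nw s k * (c k ⬝ᵥ Ghat gbar gtil x y s))
      ≤ mw k * CVaR α pt (fun i => c k ⬝ᵥ z i) := by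
    intro k
    obtain ⟨i, hi⟩ := (cvar_attained α p (fun s => c k ⬝ᵥ Ghat gbar gtil x y s) hα0 hα1 hp hp1).1
    refine le_trans ?_ (mul_le_mul_of_nonneg_left (hcv (c k) (hc k)) (hmw k))
    rw [hi]
    set η := c k ⬝ᵥ Ghat gbar gtil x y i
    have e : mw k * (η + (1 - α)⁻¹ * ∑ s, p s * max (c k ⬝ᵥ Ghat gbar gtil x y s - η) 0)
        = ∑ s, p s * (nw s k * η + mw k / (1 - α) * max (c k ⬝ᵥ Ghat gbar gtil x y s - η) 0) := by
      simp only [mul_add, Finset.sum_add_distrib]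
      congr 1
      · rw [← hsum k, Finset.sum_mul]
        exact Finset.sum_congr rfl fun s _ => by ring
      · rw [Finset.mul_sum, Finset.mul_sum]
        exact Finset.sum_congr rfl fun s _ => by ring
    rw [e]
    refine Finset.sum_le_sum fun s _ => mul_le_mul_of_nonneg_left ?_ (hp s).le
    have a1 := mul_le_mul_of_nonneg_right (hbd s k) (le_max_right (c k ⬝ᵥ Ghat gbar gtil x y s - η) 0)
    have a2 := mul_le_mul_of_nonneg_left (le_max_left (c k ⬝ᵥ Ghat gbar gtil x y s - η) 0) (hnw s k)
    linarith
  have h1' : ∑ s, p s * ∑ k, nw s k * ((c k ᵥ* gbar s) ⬝ᵥ x)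
      + ∑ s, p s * ∑ k, nw s k * ((c k ᵥ* gtil s) ⬝ᵥ y s)
      ≤ ∑ k, mw k * CVaR α pt (fun i => c k ⬝ᵥ z i) := by
    refine le_trans (le_of_eq ?_) (Finset.sum_le_sum fun k _ => h1 k)
    rw [Finset.sum_comm, ← Finset.sum_add_distrib]
    refine Finset.sum_congr rfl fun s _ => ?_
    rw [← mul_add, ← Finset.sum_add_distrib, Finset.mul_sum]
    exact Finset.sum_congr rfl fun k _ => by rw [hg]; ring
  have h2 : (lam ᵥ* A) ⬝ᵥ x ≤ lam ⬝ᵥ b := by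
    rw [← dotProduct_mulVec]
    exact Finset.sum_le_sum fun i _ => mul_le_mul_of_nonneg_left (hA i) (hlam i)
  have h3 : ∑ s, p s * (piv s ⬝ᵥ hvec s)
      ≤ ∑ s, p s * ((piv s ᵥ* Tm s) ⬝ᵥ x) + ∑ s, p s * ((piv s ᵥ* Wm s) ⬝ᵥ y s) := by
    rw [← Finset.sum_add_distrib]
    refine Finset.sum_le_sum fun s _ => ?_
    rw [← mul_add, ← dotProduct_mulVec, ← dotProduct_mulVec, ← dotProduct_add]
    exact mul_le_mul_of_nonneg_left (Finset.sum_le_sum fun i _ =>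
      mul_le_mul_of_nonneg_left ((hY s).2 i) (hpiv s i)) (hp s).le
  have h4 : ∑ s, p s * ((piv s ᵥ* Tm s) ⬝ᵥ x) - ∑ s, p s * ∑ k, nw s k * ((c k ᵥ* gbar s) ⬝ᵥ x)
      ≤ fv ⬝ᵥ x + (lam ᵥ* A) ⬝ᵥ x := by
    rw [← add_dotProduct]
    refine le_trans (le_of_eq ?_) (Finset.sum_le_sum fun j _ => mul_le_mul_of_nonneg_right (hfx j) (hx j))
    simp only [Finset.sum_mul]
    rw [Finset.sum_comm, ← Finset.sum_sub_distrib]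
    refine Finset.sum_congr rfl fun s _ => ?_
    rw [← mul_sub]
    simp only [mul_assoc (p s)]
    rw [← Finset.mul_sum]
    congr 1
    simp only [sub_mul, Finset.sum_sub_distrib, Finset.sum_mul]
    congr 1
    rw [Finset.sum_comm]
    refine Finset.sum_congr rfl fun k _ => ?_
    rw [dotProduct, Finset.mul_sum]
    exact Finset.sum_congr rfl fun k _ => by ring
  have h5 : ∑ s, p s * ((piv s ᵥ* Wm s) ⬝ᵥ y s) - ∑ s, p s * ∑ k, nw s k * ((c k ᵥ* gtil s) ⬝ᵥ y s)
      ≤ ∑ s, p s * (q s ⬝ᵥ y s) := by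
    rw [← Finset.sum_sub_distrib]
    refine Finset.sum_le_sum fun s _ => ?_
    rw [← mul_sub]
    refine mul_le_mul_of_nonneg_left ?_ (hp s).le
    refine le_trans (le_of_eq ?_) (Finset.sum_le_sum fun j _ => mul_le_mul_of_nonneg_right (hqy s j) ((hY s).1 j))
    simp only [sub_mul, Finset.sum_sub_distrib, Finset.sum_mul]
    congr 1
    rw [Finset.sum_comm]
    refine Finset.sum_congr rfl fun k _ => ?_
    rw [dotProduct, Finset.mul_sum]
    exact Finset.sum_congr rfl fun k _ => by ring
  unfold DualObj PrimalObj
  linarith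

lemma dual_combo {m m1 m2 n1 n2 d K : ℕ} (p : Fin m → ℝ)
    (α : ℝ)
    (A : Matrix (Fin m1) (Fin n1) ℝ) (fv fv' : Fin n1 → ℝ)
    (Tm : Fin m → Matrix (Fin m2) (Fin n1) ℝ)
    (Wm : Fin m → Matrix (Fin m2) (Fin n2) ℝ)
    (q q' : Fin m → Fin n2 → ℝ)
    (gbar : Fin m → Matrix (Fin d) (Fin n1) ℝ)
    (gtil : Fin m → Matrix (Fin d) (Fin n2) ℝ)
    (C : Set (Fin d → ℝ))
    (c : Fin K → Fin d → ℝ) (mw mw' : Fin K → ℝ) (nw nw' : Fin m → Fin K → ℝ)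
    (lam lam' : Fin m1 → ℝ) (piv piv' : Fin m → Fin m2 → ℝ)
    (hD : DualFeas α p A fv Tm Wm q gbar gtil C c mw nw lam piv)
    (hD' : DualFeas α p A fv' Tm Wm q' gbar gtil C c mw' nw' lam' piv') (t t' : ℝ)
    (ht : 0 ≤ t) (ht' : 0 ≤ t') :
    DualFeas α p A (t • fv + t' • fv') Tm Wm (t • q + t' • q') gbar gtil C c
      (t • mw + t' • mw') (t • nw + t' • nw') (t • lam + t' • lam') (t • piv + t' • piv') := by
  obtain ⟨hc, hmw, hnw, hlam, hpiv, hsum, hbd, hfx, hqy⟩ := hD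
  obtain ⟨-, hmw', hnw', hlam', hpiv', hsum', hbd', hfx', hqy'⟩ := hD'
  refine ⟨hc, ?_, ?_, ?_, ?_, ?_, ?_, ?_, ?_⟩
  · intro k
    have := mul_nonneg ht (hmw k); have := mul_nonneg ht' (hmw' k)
    simp; linarith
  · intro s k
    have := mul_nonneg ht (hnw s k); have := mul_nonneg ht' (hnw' s k)
    simp; linarith
  · intro k
    have := mul_nonneg ht (hlam k); have := mul_nonneg ht' (hlam' k)
    simp; linarith
  · intro s k
    have := mul_nonneg ht (hpiv s k); have := mul_nonneg ht' (hpiv' s k)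
    simp; linarith
  · intro k
    simp only [Pi.add_apply, Pi.smul_apply, smul_eq_mul]
    rw [← hsum k, ← hsum' k, Finset.mul_sum, Finset.mul_sum, ← Finset.sum_add_distrib]
    exact Finset.sum_congr rfl fun s _ => by ring
  · intro s k
    have h1 := mul_le_mul_of_nonneg_left (hbd s k) ht
    have h2 := mul_le_mul_of_nonneg_left (hbd' s k) ht'
    simp only [Pi.add_apply, Pi.smul_apply, smul_eq_mul, add_div, mul_div_assoc]
    linarith
  · intro j
    have h1 := mul_le_mul_of_nonneg_left (hfx j) ht
    have h2 := mul_le_mul_of_nonneg_left (hfx' j) ht'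
    have e : ∑ s, p s * (Matrix.vecMul ((t • piv + t' • piv') s) (Tm s) j
        - ∑ k, (t • nw + t' • nw') s k * Matrix.vecMul (c k) (gbar s) j)
        = t * (∑ s, p s * (Matrix.vecMul (piv s) (Tm s) j - ∑ k, nw s k * Matrix.vecMul (c k) (gbar s) j))
        + t' * (∑ s, p s * (Matrix.vecMul (piv' s) (Tm s) j - ∑ k, nw' s k * Matrix.vecMul (c k) (gbar s) j)) := by
      rw [Finset.mul_sum, Finset.mul_sum, ← Finset.sum_add_distrib]
      refine Finset.sum_congr rfl fun s _ => ?_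
      simp only [Pi.add_apply, Pi.smul_apply, smul_eq_mul, add_vecMul, smul_vecMul, add_mul, Finset.sum_add_distrib, mul_assoc, ← Finset.mul_sum]
      ring
    rw [e]
    simp only [Pi.add_apply, Pi.smul_apply, smul_eq_mul, add_vecMul, smul_vecMul]
    linarith
  · intro s j
    have h1 := mul_le_mul_of_nonneg_left (hqy s j) ht
    have h2 := mul_le_mul_of_nonneg_left (hqy' s j) ht'
    simp only [Pi.add_apply, Pi.smul_apply, smul_eq_mul, add_vecMul, smul_vecMul, add_mul, Finset.sum_add_distrib, mul_assoc, ← Finset.mul_sum]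
    linarith

lemma dualObj_combo {m m1 m2 d τ K : ℕ} (α : ℝ) (p : Fin m → ℝ)
    (b : Fin m1 → ℝ) (hvec : Fin m → Fin m2 → ℝ)
    (z : Fin τ → Fin d → ℝ) (pt : Fin τ → ℝ)
    (c : Fin K → Fin d → ℝ) (mw mw' : Fin K → ℝ)
    (lam lam' : Fin m1 → ℝ) (piv piv' : Fin m → Fin m2 → ℝ) (t t' : ℝ) :
    DualObj α p b hvec z pt c (t • mw + t' • mw') (t • lam + t' • lam') (t • piv + t' • piv')
      = t * DualObj α p b hvec z pt c mw lam piv + t' * DualObj α p b hvec z pt c mw' lam' piv' := by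
  unfold DualObj
  simp only [Pi.add_apply, Pi.smul_apply, smul_eq_mul, add_dotProduct, smul_dotProduct, add_mul, mul_add,
    Finset.sum_add_distrib, mul_assoc, mul_left_comm (p _) t, mul_left_comm (p _) t', ← Finset.mul_sum]
  ring

lemma dual_append {m m1 m2 n1 n2 d τ K K' : ℕ} (p : Fin m → ℝ)
    (α : ℝ)
    (A : Matrix (Fin m1) (Fin n1) ℝ) (b : Fin m1 → ℝ) (fv : Fin n1 → ℝ)
    (Tm : Fin m → Matrix (Fin m2) (Fin n1) ℝ)
    (Wm : Fin m → Matrix (Fin m2) (Fin n2) ℝ)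
    (q : Fin m → Fin n2 → ℝ) (hvec : Fin m → Fin m2 → ℝ)
    (gbar : Fin m → Matrix (Fin d) (Fin n1) ℝ)
    (gtil : Fin m → Matrix (Fin d) (Fin n2) ℝ)
    (z : Fin τ → Fin d → ℝ) (pt : Fin τ → ℝ)
    (C : Set (Fin d → ℝ))
    (c : Fin K → Fin d → ℝ) (mw : Fin K → ℝ) (nw : Fin m → Fin K → ℝ)
    (lam : Fin m1 → ℝ) (piv : Fin m → Fin m2 → ℝ)
    (hD : DualFeas α p A fv Tm Wm q gbar gtil C c mw nw lam piv)
    (c' : Fin K' → Fin d → ℝ) (hc' : ∀ k, c' k ∈ C) :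
    ∃ (mw' : Fin (K + K') → ℝ) (nw' : Fin m → Fin (K + K') → ℝ),
      DualFeas α p A fv Tm Wm q gbar gtil C (Fin.append c c') mw' nw' lam piv ∧
      DualObj α p b hvec z pt (Fin.append c c') mw' lam piv = DualObj α p b hvec z pt c mw lam piv := by
  obtain ⟨hc, hmw, hnw, hlam, hpiv, hsum, hbd, hfx, hqy⟩ := hD
  refine ⟨Fin.append mw (fun _ => 0), fun s => Fin.append (nw s) (fun _ => 0),
    ⟨?_, ?_, ?_, hlam, hpiv, ?_, ?_, ?_, ?_⟩, ?_⟩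
  · intro k
    refine Fin.addCases (fun i => ?_) (fun i => ?_) k <;> simp [hc, hc']
  · intro k
    refine Fin.addCases (fun i => ?_) (fun i => ?_) k <;> simp [hmw]
  · intro s k
    refine Fin.addCases (fun i => ?_) (fun i => ?_) k <;> simp [hnw]
  · intro k
    refine Fin.addCases (fun i => ?_) (fun i => ?_) k <;> simp [hsum]
  · intro s k
    refine Fin.addCases (fun i => ?_) (fun i => ?_) k <;> simp [hbd]
  · intro j
    simpa [Fin.sum_univ_add] using hfx j
  · intro s j
    simpa [Fin.sum_univ_add] using hqy s j
  · simp [DualObj, Fin.sum_univ_add]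

/-- decision space of the lifted finite linear program -/
abbrev LPVar (m n1 n2 K : ℕ) : Type :=
  (Fin n1 → ℝ) × (Fin m → Fin n2 → ℝ) × (Fin K → ℝ) × (Fin m → Fin K → ℝ)

lemma certificate {m m1 m2 n1 n2 d τ K : ℕ}
    (p : Fin m → ℝ) (hp : ∀ s, 0 < p s) (hp1 : ∑ s, p s = 1)
    (α : ℝ) (hα0 : 0 ≤ α) (hα1 : α < 1)
    (A : Matrix (Fin m1) (Fin n1) ℝ) (b : Fin m1 → ℝ) (fv : Fin n1 → ℝ)
    (Tm : Fin m → Matrix (Fin m2) (Fin n1) ℝ)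
    (Wm : Fin m → Matrix (Fin m2) (Fin n2) ℝ)
    (q : Fin m → Fin n2 → ℝ) (hvec : Fin m → Fin m2 → ℝ)
    (gbar : Fin m → Matrix (Fin d) (Fin n1) ℝ)
    (gtil : Fin m → Matrix (Fin d) (Fin n2) ℝ)
    (z : Fin τ → Fin d → ℝ) (pt : Fin τ → ℝ) (C : Set (Fin d → ℝ))
    (c : Fin K → Fin d → ℝ) (hcC : ∀ k, c k ∈ C)
    (hred : ∀ G : Fin m → Fin d → ℝ,
        (∀ k, CVaR α p (fun s => c k ⬝ᵥ G s) ≤ CVaR α pt (fun i => c k ⬝ᵥ z i)) →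
        ∀ c ∈ C, CVaR α p (fun s => c ⬝ᵥ G s) ≤ CVaR α pt (fun i => c ⬝ᵥ z i))
    (w : ℝ)
    (hw : ∀ x y, PrimalFeas α p A b Tm Wm hvec gbar gtil z pt C x y → w < PrimalObj p fv q x y) :
    ∃ (mw : Fin K → ℝ) (nw : Fin m → Fin K → ℝ)
      (lam : Fin m1 → ℝ) (piv : Fin m → Fin m2 → ℝ) (r : ℝ), 0 ≤ r ∧
      DualFeas α p A (r • fv) Tm Wm (r • q) gbar gtil C c mw nw lam piv ∧
      r * w < DualObj α p b hvec z pt c mw lam piv := by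
  let R : Fin K → ℝ := fun k => CVaR α pt (fun i => c k ⬝ᵥ z i)
  let a1 : Fin n1 → LPVar m n1 n2 K →ₗ[ℝ] ℝ := fun j => IsLinearMap.mk' (fun X => X.1 j)
    ⟨fun X Y => by simp, fun t X => by simp⟩
  let a2 : Fin m1 → LPVar m n1 n2 K →ₗ[ℝ] ℝ := fun i => IsLinearMap.mk' (fun X => -(A *ᵥ X.1) i)
    ⟨fun X Y => by simp [mulVec_add]; ring, fun t X => by simp [mulVec_smul]⟩
  let a3 : Fin m × Fin n2 → LPVar m n1 n2 K →ₗ[ℝ] ℝ := fun sj => IsLinearMap.mk' (fun X => X.2.1 sj.1 sj.2)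
    ⟨fun X Y => by simp, fun t X => by simp⟩
  let a4 : Fin m × Fin m2 → LPVar m n1 n2 K →ₗ[ℝ] ℝ := fun si =>
    IsLinearMap.mk' (fun X => (Tm si.1 *ᵥ X.1) si.2 + (Wm si.1 *ᵥ X.2.1 si.1) si.2)
    ⟨fun X Y => by simp [mulVec_add]; ring, fun t X => by simp [mulVec_smul]; ring⟩
  let a5 : Fin m × Fin K → LPVar m n1 n2 K →ₗ[ℝ] ℝ := fun sk => IsLinearMap.mk' (fun X => X.2.2.2 sk.1 sk.2)
    ⟨fun X Y => by simp, fun t X => by simp⟩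
  let a6 : Fin m × Fin K → LPVar m n1 n2 K →ₗ[ℝ] ℝ := fun sk =>
    IsLinearMap.mk' (fun X => X.2.2.2 sk.1 sk.2
      - (c sk.2 ⬝ᵥ (gbar sk.1 *ᵥ X.1) + c sk.2 ⬝ᵥ (gtil sk.1 *ᵥ X.2.1 sk.1)) + X.2.2.1 sk.2)
    ⟨fun X Y => by simp [mulVec_add]; ring, fun t X => by simp [mulVec_smul]; ring⟩
  let a7 : Fin K → LPVar m n1 n2 K →ₗ[ℝ] ℝ := fun k =>
    IsLinearMap.mk' (fun X => - X.2.2.1 k - (1 - α)⁻¹ * ∑ s, p s * X.2.2.2 s k)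
    ⟨fun X Y => by simp [mul_add, Finset.sum_add_distrib]; ring,
     fun t X => by simp [mul_left_comm (p _) t, ← Finset.mul_sum]; ring⟩
  let φ : LPVar m n1 n2 K →ₗ[ℝ] ℝ := IsLinearMap.mk' (fun X => PrimalObj p fv q X.1 X.2.1)
    ⟨fun X Y => by simp [PrimalObj, mul_add, Finset.sum_add_distrib]; ring,
     fun t X => by simp [PrimalObj, mul_left_comm (p _) t, ← Finset.mul_sum]; ring⟩
  let a := Sum.elim a1 (Sum.elim a2 (Sum.elim a3 (Sum.elim a4 (Sum.elim a5 (Sum.elim a6 a7)))))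
  let bb : Fin n1 ⊕ Fin m1 ⊕ (Fin m × Fin n2) ⊕ (Fin m × Fin m2) ⊕ (Fin m × Fin K) ⊕ (Fin m × Fin K) ⊕ Fin K → ℝ :=
    Sum.elim (fun _ => 0) (Sum.elim (fun i => - b i) (Sum.elim (fun _ => 0)
      (Sum.elim (fun si => hvec si.1 si.2) (Sum.elim (fun _ => 0) (Sum.elim (fun _ => 0) (fun k => - R k))))))
  obtain ⟨Y, r, hY, hr, hYa, hYb⟩ := aux_lp a bb φ w (by
    rintro ⟨x, y, η, t⟩ hX
    refine hw x y ⟨⟨?_, ?_, ?_⟩, ?_⟩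
    · intro j
      exact hX (.inl j)
    · intro i
      have : - b i ≤ -(A *ᵥ x) i := hX (.inr (.inl i))
      linarith
    · intro s
      refine ⟨fun j => hX (.inr (.inr (.inl (s, j)))), fun i => hX (.inr (.inr (.inr (.inl (s, i)))))⟩
    · apply hred
      intro k
      have h7 : - R k ≤ - η k - (1 - α)⁻¹ * ∑ s, p s * t s k :=
        hX (.inr (.inr (.inr (.inr (.inr (.inr k))))))
      refine ((cvar_attained α p _ hα0 hα1 hp hp1).2 (η k)).trans ?_
      have h8 : ∑ s, p s * max (c k ⬝ᵥ Ghat gbar gtil x y s - η k) 0 ≤ ∑ s, p s * t s k := by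
        refine Finset.sum_le_sum fun s _ => mul_le_mul_of_nonneg_left (max_le ?_ ?_) (hp s).le
        · have h6 : 0 ≤ t s k - (c k ⬝ᵥ (gbar s *ᵥ x) + c k ⬝ᵥ (gtil s *ᵥ y s)) + η k :=
            hX (.inr (.inr (.inr (.inr (.inr (.inl (s, k)))))))
          simp only [Ghat, dotProduct_add]
          linarith
        · exact hX (.inr (.inr (.inr (.inr (.inl (s, k))))))
      have h9 := mul_le_mul_of_nonneg_left h8 (inv_nonneg.2 (by linarith : 0 ≤ 1 - α))
      change _ ≤ R k
      linarith)
  let Y1 : Fin n1 → ℝ := fun j => Y (.inl j)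
  let lam : Fin m1 → ℝ := fun i => Y (.inr (.inl i))
  let Y3 : Fin m → Fin n2 → ℝ := fun s j => Y (.inr (.inr (.inl (s, j))))
  let Y4 : Fin m → Fin m2 → ℝ := fun s i => Y (.inr (.inr (.inr (.inl (s, i)))))
  let Y5 : Fin m → Fin K → ℝ := fun s k => Y (.inr (.inr (.inr (.inr (.inl (s, k))))))
  let Y6 : Fin m → Fin K → ℝ := fun s k => Y (.inr (.inr (.inr (.inr (.inr (.inl (s, k)))))))
  let mw : Fin K → ℝ := fun k => Y (.inr (.inr (.inr (.inr (.inr (.inr k))))))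
  let piv : Fin m → Fin m2 → ℝ := fun s i => Y4 s i / p s
  let nw : Fin m → Fin K → ℝ := fun s k => Y6 s k / p s
  have e4 : ∀ s i, Y4 s i = p s * piv s i := fun s i => by
    have := (hp s).ne'
    simp only [piv]; field_simp
  have e6 : ∀ s k, Y6 s k = p s * nw s k := fun s k => by
    have := (hp s).ne'
    simp only [nw]; field_simp
  have hmain : ∀ (x : Fin n1 → ℝ) (y : Fin m → Fin n2 → ℝ) (η : Fin K → ℝ) (t : Fin m → Fin K → ℝ),
      ∑ j, Y1 j * x j - ∑ i, lam i * (A *ᵥ x) i + ∑ s, ∑ j, Y3 s j * y s j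
        + ∑ s, ∑ i, p s * piv s i * ((Tm s *ᵥ x) i + (Wm s *ᵥ y s) i)
        + ∑ s, ∑ k, Y5 s k * t s k
        + ∑ s, ∑ k, p s * nw s k * (t s k - (c k ⬝ᵥ (gbar s *ᵥ x) + c k ⬝ᵥ (gtil s *ᵥ y s)) + η k)
        + ∑ k, mw k * (- η k - (1 - α)⁻¹ * ∑ s, p s * t s k) = r * PrimalObj p fv q x y := by
    intro x y η t
    have := hYa (x, y, η, t)
    simp only [Fintype.sum_sum_type, Fintype.sum_prod_type] at this
    simp only [← e4, ← e6]
    rw [sub_eq_add_neg, ← Finset.sum_neg_distrib]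
    simp only [← mul_neg]
    refine Eq.trans ?_ this
    simp only [add_assoc]
    rfl
  refine ⟨mw, nw, lam, piv, r, hr, ⟨hcC, fun k => hY _, fun s k => div_nonneg (hY _) (hp s).le,
    fun i => hY _, fun s i => div_nonneg (hY _) (hp s).le, ?_, ?_, ?_, ?_⟩, ?_⟩
  · intro k
    have := hmain 0 0 (Pi.single k 1) 0
    simp [PrimalObj, Pi.single_apply] at this
    linarith
  · intro s k
    have := hmain 0 0 0 (fun s' k' => if s' = s then (if k' = k then 1 else 0) else 0)
    have h5 : 0 ≤ Y5 s k := hY _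
    simp [PrimalObj] at this
    have h6 : p s * nw s k ≤ p s * (mw k / (1 - α)) := by
      rw [div_eq_mul_inv]
      linarith
    exact le_of_mul_le_mul_left h6 (hp s)
  · intro j
    have := hmain (Pi.single j 1) 0 0 0
    have h1 : 0 ≤ Y1 j := hY _
    simp [PrimalObj, Pi.single_apply] at this
    have e1 : ∑ s, p s * ((piv s ᵥ* Tm s) j - ∑ k, nw s k * (c k ᵥ* gbar s) j)
        = ∑ s, ∑ i, p s * piv s i * Tm s i j - ∑ s, ∑ k, p s * nw s k * (c k ⬝ᵥ (gbar s).col j) := by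
      rw [← Finset.sum_sub_distrib]
      refine Finset.sum_congr rfl fun s _ => ?_
      rw [mul_sub, vecMul, dotProduct, Finset.mul_sum, Finset.mul_sum]
      congr 1
      · exact Finset.sum_congr rfl fun i _ => by ring
      · refine Finset.sum_congr rfl fun k _ => ?_
        rw [← mul_assoc]; rfl
    have e2 : (lam ᵥ* A) j = ∑ i, lam i * A i j := rfl
    rw [e1, e2]
    simp only [Pi.smul_apply, smul_eq_mul]
    linarith
  · intro s j
    have := hmain 0 (fun s' => if s' = s then Pi.single j 1 else 0) 0 0
    have h1 : 0 ≤ Y3 s j := hY _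
    simp only [PrimalObj, mulVec_zero, Pi.zero_apply, mul_zero, Finset.sum_const_zero, zero_add, dotProduct_zero,
      sub_zero, neg_zero, add_zero, zero_sub] at this
    rw [Finset.sum_eq_single s (fun x _ hx => by simp [hx]) (by simp),
      Finset.sum_eq_single s (fun x _ hx => by simp [hx]) (by simp),
      Finset.sum_eq_single s (fun x _ hx => by simp [hx]) (by simp),
      Finset.sum_eq_single s (fun x _ hx => by simp [hx]) (by simp)] at this
    simp [Pi.single_apply] at this
    have h6 : p s * ((piv s ᵥ* Wm s) j - ∑ k, nw s k * (c k ᵥ* gtil s) j) ≤ p s * (r * q s j) := by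
      have e1 : p s * ((piv s ᵥ* Wm s) j - ∑ k, nw s k * (c k ᵥ* gtil s) j)
          = ∑ i, p s * piv s i * Wm s i j - ∑ k, p s * nw s k * (c k ⬝ᵥ (gtil s).col j) := by
        rw [mul_sub, vecMul, dotProduct, Finset.mul_sum, Finset.mul_sum]
        congr 1
        · exact Finset.sum_congr rfl fun i _ => by ring
        · refine Finset.sum_congr rfl fun k _ => ?_
          rw [← mul_assoc]; rfl
      rw [e1]
      linarith
    exact le_of_mul_le_mul_left h6 (hp s)
  · have e : ∑ i, Y i * bb i = DualObj α p b hvec z pt c mw lam piv := by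
      simp only [Fintype.sum_sum_type, Fintype.sum_prod_type]
      simp only [bb, Sum.elim_inl, Sum.elim_inr, mul_zero, Finset.sum_const_zero, DualObj, mul_neg, Finset.sum_neg_distrib]
      have e1 : ∀ s, p s * (piv s ⬝ᵥ hvec s) = ∑ i, Y4 s i * hvec s i := by
        intro s
        rw [dotProduct, Finset.mul_sum]
        exact Finset.sum_congr rfl fun i _ => by rw [e4]; ring
      simp only [e1]
      simp only [dotProduct, lam, mw, Y4, R]
      ring
    rwa [e] at hYb

/-- Theorem A.1, strong duality part: (LinearP) has a finite
optimal value iff (LinearD) does, in which case the optimal values coincide. -/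
theorem linear_strong_duality
    (m m1 m2 n1 n2 d τ : ℕ)
    (p : Fin m → ℝ) (hp : ∀ s, 0 < p s) (hp1 : ∑ s, p s = 1)
    (α : ℝ) (hα0 : 0 ≤ α) (hα1 : α < 1)
    (A : Matrix (Fin m1) (Fin n1) ℝ) (b : Fin m1 → ℝ) (fv : Fin n1 → ℝ)
    (Tm : Fin m → Matrix (Fin m2) (Fin n1) ℝ)
    (Wm : Fin m → Matrix (Fin m2) (Fin n2) ℝ)
    (q : Fin m → Fin n2 → ℝ) (hvec : Fin m → Fin m2 → ℝ)
    (gbar : Fin m → Matrix (Fin d) (Fin n1) ℝ)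
    (gtil : Fin m → Matrix (Fin d) (Fin n2) ℝ)
    (z : Fin τ → Fin d → ℝ)
    (pt : Fin τ → ℝ) (hpt : ∀ i, 0 < pt i) (hpt1 : ∑ i, pt i = 1)
    (C : Set (Fin d → ℝ)) (hCsub : C ⊆ {c | (∀ i, 0 ≤ c i) ∧ ∑ i, c i = 1})
    (hCpoly : ∃ F : Finset (Fin d → ℝ), C = convexHull ℝ (F : Set (Fin d → ℝ)))
    :
    ((∃ v : ℝ, IsGLB {v : ℝ | ∃ x y,
        PrimalFeas α p A b Tm Wm hvec gbar gtil z pt C x y ∧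
        v = PrimalObj p fv q x y} v) ↔
      (∃ v : ℝ, IsLUB {v : ℝ | ∃ (K : ℕ) (c : Fin K → Fin d → ℝ) (mw : Fin K → ℝ)
        (nw : Fin m → Fin K → ℝ) (lam : Fin m1 → ℝ) (piv : Fin m → Fin m2 → ℝ),
        DualFeas α p A fv Tm Wm q gbar gtil C c mw nw lam piv ∧
        v = DualObj α p b hvec z pt c mw lam piv} v)) ∧
    ∀ v w : ℝ,
      IsGLB {v : ℝ | ∃ x y,
        PrimalFeas α p A b Tm Wm hvec gbar gtil z pt C x y ∧
        v = PrimalObj p fv q x y} v →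
      IsLUB {v : ℝ | ∃ (K : ℕ) (c : Fin K → Fin d → ℝ) (mw : Fin K → ℝ)
        (nw : Fin m → Fin K → ℝ) (lam : Fin m1 → ℝ) (piv : Fin m → Fin m2 → ℝ),
        DualFeas α p A fv Tm Wm q gbar gtil C c mw nw lam piv ∧
        v = DualObj α p b hvec z pt c mw lam piv} w →
      v = w := by
  obtain ⟨F', hF'C, hF'⟩ := finite_reduction α hα0 hα1 p hp hp1 z pt hpt hpt1 C hCpoly
  obtain ⟨K', cF, hcF⟩ : ∃ (K' : ℕ) (cF : Fin K' → Fin d → ℝ), ∀ c, c ∈ F' ↔ ∃ k, cF k = c := by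
    refine ⟨F'.card, fun k => (F'.equivFin.symm k : Fin d → ℝ), fun c => ⟨fun h => ?_, ?_⟩⟩
    · exact ⟨F'.equivFin ⟨c, h⟩, by simp⟩
    · rintro ⟨k, rfl⟩
      exact (F'.equivFin.symm k).2
  have hcFC : ∀ k, cF k ∈ C := fun k => hF'C ((hcF _).2 ⟨k, rfl⟩)
  set PS : Set ℝ := {v : ℝ | ∃ x y,
        PrimalFeas α p A b Tm Wm hvec gbar gtil z pt C x y ∧
        v = PrimalObj p fv q x y} with hPS
  set DS : Set ℝ := {v : ℝ | ∃ (K : ℕ) (c : Fin K → Fin d → ℝ) (mw : Fin K → ℝ)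
        (nw : Fin m → Fin K → ℝ) (lam : Fin m1 → ℝ) (piv : Fin m → Fin m2 → ℝ),
        DualFeas α p A fv Tm Wm q gbar gtil C c mw nw lam piv ∧
        v = DualObj α p b hvec z pt c mw lam piv} with hDS
  have hweak : ∀ u ∈ DS, ∀ v ∈ PS, u ≤ v := by
    rintro u ⟨K, c, mw, nw, lam, piv, hD, rfl⟩ v ⟨x, y, hP, rfl⟩
    exact weak_duality p hp hp1 α hα0 hα1 A b fv Tm Wm q hvec gbar gtil z pt C x y hP c mw nw lam piv hD
  -- normalising a certificate with positive multiplier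
  have hnorm : ∀ (K : ℕ) (c : Fin K → Fin d → ℝ) (mw : Fin K → ℝ) (nw : Fin m → Fin K → ℝ)
      (lam : Fin m1 → ℝ) (piv : Fin m → Fin m2 → ℝ) (r w : ℝ), 0 < r →
      DualFeas α p A (r • fv) Tm Wm (r • q) gbar gtil C c mw nw lam piv →
      r * w < DualObj α p b hvec z pt c mw lam piv → ∃ u ∈ DS, w < u := by
    intro K c mw nw lam piv r w hr hD hlt
    have h1 := dual_combo p α A _ _ Tm Wm _ _ gbar gtil C c mw mw nw nw lam lam piv piv hD hD r⁻¹ 0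
      (inv_nonneg.2 hr.le) le_rfl
    have h2 := dualObj_combo α p b hvec z pt c mw mw lam lam piv piv r⁻¹ 0
    have e1 : r⁻¹ • (r • fv) + (0 : ℝ) • (r • fv) = fv := by
      rw [zero_smul, add_zero, inv_smul_smul₀ hr.ne']
    have e2 : r⁻¹ • (r • q) + (0 : ℝ) • (r • q) = q := by
      rw [zero_smul, add_zero, inv_smul_smul₀ hr.ne']
    rw [e1, e2] at h1
    refine ⟨_, ⟨K, c, _, _, _, _, h1, rfl⟩, ?_⟩
    rw [h2, zero_mul, add_zero, ← div_eq_inv_mul, lt_div_iff₀ hr]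
    linarith
  have hPD : ∀ v, IsGLB PS v → IsLUB DS v := by
    intro v hv
    refine ⟨fun u hu => hv.2 fun v' hv' => hweak u hu v' hv', fun u hu => ?_⟩
    by_contra hlt
    push Not at hlt
    obtain ⟨mw, nw, lam, piv, r, hr, hD, hobj⟩ := certificate p hp hp1 α hα0 hα1 A b fv Tm Wm q hvec gbar gtil z pt C
      cF hcFC (fun G h => hF' G (fun c hc => by
        obtain ⟨k, rfl⟩ := (hcF c).1 hc
        exact h k)) u (fun x y hP => lt_of_lt_of_le hlt (hv.1 ⟨x, y, hP, rfl⟩))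
    rcases hr.eq_or_lt with rfl | hr
    · obtain ⟨_, x, y, hP, rfl⟩ : PS.Nonempty := by
        by_contra hne
        rw [Set.not_nonempty_iff_eq_empty] at hne
        rw [hne] at hv
        have := hv.2 (show v + 1 ∈ lowerBounds (∅ : Set ℝ) by simp)
        linarith
      have := weak_duality p hp hp1 α hα0 hα1 A b _ Tm Wm _ hvec gbar gtil z pt C x y hP cF mw nw lam piv hD
      simp [PrimalObj] at this
      linarith
    · obtain ⟨u', hu', hlt'⟩ := hnorm _ _ _ _ _ _ _ _ hr hD hobj
      exact absurd (hu hu') (not_le.2 hlt')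
  have hDP : ∀ w, IsLUB DS w → IsGLB PS w := by
    intro w hw
    refine ⟨fun u hu => hw.2 fun v' hv' => hweak v' hv' u hu, fun l hl => ?_⟩
    by_contra hlt
    push Not at hlt
    obtain ⟨_, K0, c0, mw0, nw0, lam0, piv0, hD0, rfl⟩ : DS.Nonempty := by
      by_contra hne
      rw [Set.not_nonempty_iff_eq_empty] at hne
      rw [hne] at hw
      have := hw.2 (show w - 1 ∈ upperBounds (∅ : Set ℝ) by simp)
      linarith
    obtain ⟨mw1, nw1, hD1, -⟩ := dual_append p α A b fv Tm Wm q hvec gbar gtil z pt C c0 mw0 nw0 lam0 piv0 hD0 cF hcFC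
    obtain ⟨mw, nw, lam, piv, r, hr, hD, hobj⟩ := certificate p hp hp1 α hα0 hα1 A b fv Tm Wm q hvec gbar gtil z pt C
      (Fin.append c0 cF) hD1.1 (fun G h => hF' G (fun c hc => by
        obtain ⟨k, rfl⟩ := (hcF c).1 hc
        have := h (Fin.natAdd K0 k)
        rwa [Fin.append_right] at this)) w (fun x y hP => lt_of_lt_of_le hlt (hl ⟨x, y, hP, rfl⟩))
    rcases hr.eq_or_lt with rfl | hr
    · rw [zero_mul] at hobj
      set D1 := DualObj α p b hvec z pt (Fin.append c0 cF) mw1 lam0 piv0 with hD1def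
      set D := DualObj α p b hvec z pt (Fin.append c0 cF) mw lam piv with hDdef
      have hD1w : D1 ≤ w := hw.1 ⟨_, _, _, _, _, _, hD1, rfl⟩
      have ht : 0 ≤ (w - D1 + 1) / D := div_nonneg (by linarith) hobj.le
      have h1 := dual_combo p α A _ _ Tm Wm _ _ gbar gtil C _ _ _ _ _ _ _ _ _ hD1 hD 1 _ zero_le_one ht
      have h2 := dualObj_combo α p b hvec z pt (Fin.append c0 cF) mw1 mw lam0 lam piv0 piv 1 ((w - D1 + 1) / D)
      have e1 : (1 : ℝ) • fv + ((w - D1 + 1) / D) • ((0 : ℝ) • fv) = fv := by simp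
      have e2 : (1 : ℝ) • q + ((w - D1 + 1) / D) • ((0 : ℝ) • q) = q := by simp
      rw [e1, e2] at h1
      have h3 := hw.1 ⟨_, _, _, _, _, _, h1, rfl⟩
      rw [h2, ← hD1def, ← hDdef, div_mul_cancel₀ _ hobj.ne'] at h3
      linarith
    · obtain ⟨u', hu', hlt'⟩ := hnorm _ _ _ _ _ _ _ _ hr hD hobj
      exact absurd (hw.1 hu') (not_le.2 hlt')
  exact ⟨⟨fun ⟨v, hv⟩ => ⟨v, hPD v hv⟩, fun ⟨w, hw⟩ => ⟨w, hDP w hw⟩⟩,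
    fun v w hv hw => (hPD v hv).unique hw⟩
end

section
/- Theorem A.2, strong Lagrangian duality: assume the set {(x,y) : x ∈ X, y_s ∈ Y(x,s) for all s ∈ S} is nonempty and compact. If (LinearP) has an optimal solution, then the Lagrangian dual problem (LagrangianD): maximize over finitely supported nonnegative measures μ on C the value inf{L(x,y,μ) : x ∈ X, y_s ∈ Y(x,s) for all s ∈ S}, also has an optimal solution, and the optimal values of (LinearP) and (LagrangianD) coincide. -/
open Matrix
open scoped BigOperators Classical

/-- The Lagrangian `L(x,y,μ)` for a finitely supported nonnegative measure `μ`
on `C` with support points `c k` and weights `mw k`. -/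
noncomputable def Lagr {m n1 n2 d τ K : ℕ} (α : ℝ) (p : Fin m → ℝ)
    (fv : Fin n1 → ℝ) (q : Fin m → Fin n2 → ℝ)
    (gbar : Fin m → Matrix (Fin d) (Fin n1) ℝ)
    (gtil : Fin m → Matrix (Fin d) (Fin n2) ℝ)
    (z : Fin τ → Fin d → ℝ) (pt : Fin τ → ℝ)
    (c : Fin K → Fin d → ℝ) (mw : Fin K → ℝ)
    (x : Fin n1 → ℝ) (y : Fin m → Fin n2 → ℝ) : ℝ :=
  PrimalObj p fv q x y
    + ∑ k, mw k * CVaR α p (fun s => c k ⬝ᵥ Ghat gbar gtil x y s)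
    - ∑ k, mw k * CVaR α pt (fun i => c k ⬝ᵥ z i)


/-! ### CVaR basics -/

lemma cvar_mean_le {ι : Type*} [Fintype ι] {α : ℝ} (hα0 : 0 ≤ α) (hα1 : α < 1)
    {p : ι → ℝ} (hp : ∀ s, 0 < p s) (hp1 : ∑ s, p s = 1) (v : ι → ℝ) (η : ℝ) :
    ∑ s, p s * v s ≤ η + (1 - α)⁻¹ * ∑ s, p s * max (v s - η) 0 := by
  have h1 : 1 ≤ (1 - α)⁻¹ := by
    rw [one_le_inv₀ (by linarith)]; linarith
  have h2 : 0 ≤ ∑ s, p s * max (v s - η) 0 :=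
    Finset.sum_nonneg fun s _ => mul_nonneg (hp s).le (le_max_right _ _)
  have h3 : ∑ s, p s * (v s - η) ≤ ∑ s, p s * max (v s - η) 0 :=
    Finset.sum_le_sum fun s _ => mul_le_mul_of_nonneg_left (le_max_left _ _) (hp s).le
  have h4 : ∑ s, p s * (v s - η) = ∑ s, p s * v s - η := by
    simp only [mul_sub, Finset.sum_sub_distrib, ← Finset.sum_mul, hp1, one_mul]
  nlinarith

lemma cvar_le {ι : Type*} [Fintype ι] {α : ℝ} (hα0 : 0 ≤ α) (hα1 : α < 1)
    {p : ι → ℝ} (hp : ∀ s, 0 < p s) (hp1 : ∑ s, p s = 1) (v : ι → ℝ) (η : ℝ) :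
    CVaR α p v ≤ η + (1 - α)⁻¹ * ∑ s, p s * max (v s - η) 0 := by
  refine csInf_le ⟨∑ s, p s * v s, ?_⟩ ⟨η, rfl⟩
  rintro r ⟨η, rfl⟩
  exact cvar_mean_le hα0 hα1 hp hp1 v η

lemma cvar_le_of {ι : Type*} [Fintype ι] {α : ℝ} (hα0 : 0 ≤ α) (hα1 : α < 1)
    {p : ι → ℝ} (hp : ∀ s, 0 < p s) (hp1 : ∑ s, p s = 1) (v : ι → ℝ) (η : ℝ) (w : ι → ℝ)
    (hw : ∀ s, 0 ≤ w s) (hvw : ∀ s, v s - η ≤ w s) :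
    CVaR α p v ≤ η + (1 - α)⁻¹ * ∑ s, p s * w s := by
  refine (cvar_le hα0 hα1 hp hp1 v η).trans ?_
  have : 0 ≤ (1 - α)⁻¹ := inv_nonneg.2 (by linarith)
  have h3 : ∑ s, p s * max (v s - η) 0 ≤ ∑ s, p s * w s :=
    Finset.sum_le_sum fun s _ =>
      mul_le_mul_of_nonneg_left (max_le (hvw s) (hw s)) (hp s).le
  have := mul_le_mul_of_nonneg_left h3 this
  linarith

lemma le_cvar {ι : Type*} [Fintype ι] {α : ℝ} {p v : ι → ℝ} {r : ℝ}
    (h : ∀ η : ℝ, r ≤ η + (1 - α)⁻¹ * ∑ s, p s * max (v s - η) 0) : r ≤ CVaR α p v := by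
  refine le_csInf ⟨_, 0, rfl⟩ ?_
  rintro _ ⟨η, rfl⟩
  exact h η

lemma exists_lt_cvar {ι : Type*} [Fintype ι] {α : ℝ} {p v : ι → ℝ} {ε : ℝ} (hε : 0 < ε) :
    ∃ η : ℝ, η + (1 - α)⁻¹ * ∑ s, p s * max (v s - η) 0 < CVaR α p v + ε := by
  by_contra! h
  have := le_cvar h
  linarith

lemma cvar_zero {ι : Type*} [Fintype ι] {α : ℝ} (hα0 : 0 ≤ α) (hα1 : α < 1)
    {p : ι → ℝ} (hp : ∀ s, 0 < p s) (hp1 : ∑ s, p s = 1) :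
    CVaR α p (fun _ => 0) = 0 := by
  apply le_antisymm
  · simpa using cvar_le hα0 hα1 hp hp1 (fun _ => 0) 0
  · apply le_cvar
    intro η
    simpa using cvar_mean_le hα0 hα1 hp hp1 (fun _ => 0) η

lemma cvar_add {ι : Type*} [Fintype ι] {α : ℝ} (hα0 : 0 ≤ α) (hα1 : α < 1)
    {p : ι → ℝ} (hp : ∀ s, 0 < p s) (hp1 : ∑ s, p s = 1) (v w : ι → ℝ) :
    CVaR α p (fun s => v s + w s) ≤ CVaR α p v + CVaR α p w := by
  apply le_of_forall_pos_le_add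
  intro ε hε
  obtain ⟨η, h1⟩ := exists_lt_cvar (α := α) (p := p) (v := v) (half_pos hε)
  obtain ⟨η', h2⟩ := exists_lt_cvar (α := α) (p := p) (v := w) (half_pos hε)
  have := cvar_le_of hα0 hα1 hp hp1 (fun s => v s + w s) (η + η')
    (fun s => max (v s - η) 0 + max (w s - η') 0) (fun s => by positivity)
    (fun s => by linarith [le_max_left (v s - η) 0, le_max_left (w s - η') 0])
  simp only [mul_add, Finset.sum_add_distrib] at this
  linarith

lemma cvar_smul_le {ι : Type*} [Fintype ι] {α : ℝ} (hα0 : 0 ≤ α) (hα1 : α < 1)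
    {p : ι → ℝ} (hp : ∀ s, 0 < p s) (hp1 : ∑ s, p s = 1) (a : ℝ) (ha : 0 ≤ a) (v : ι → ℝ) :
    CVaR α p (fun s => a * v s) ≤ a * CVaR α p v := by
  rcases ha.eq_or_lt with rfl | ha
  · simp [cvar_zero hα0 hα1 hp hp1]
  rw [← div_le_iff₀' ha]
  apply le_cvar
  intro η
  rw [div_le_iff₀' ha]
  have := cvar_le_of hα0 hα1 hp hp1 (fun s => a * v s) (a * η)
    (fun s => a * max (v s - η) 0) (fun s => by positivity)
    (fun s => by nlinarith [le_max_left (v s - η) 0])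
  refine this.trans (le_of_eq ?_)
  have : ∑ s, p s * (a * max (v s - η) 0) = a * ∑ s, p s * max (v s - η) 0 := by
    rw [Finset.mul_sum]; exact Finset.sum_congr rfl fun s _ => by ring
  rw [this]; ring

lemma cvar_smul {ι : Type*} [Fintype ι] {α : ℝ} (hα0 : 0 ≤ α) (hα1 : α < 1)
    {p : ι → ℝ} (hp : ∀ s, 0 < p s) (hp1 : ∑ s, p s = 1) (a : ℝ) (ha : 0 < a) (v : ι → ℝ) :
    CVaR α p (fun s => a * v s) = a * CVaR α p v := by
  refine le_antisymm (cvar_smul_le hα0 hα1 hp hp1 a ha.le v) ?_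
  have := cvar_smul_le hα0 hα1 hp hp1 a⁻¹ (inv_nonneg.2 ha.le) (fun s => a * v s)
  simp only [inv_mul_cancel_left₀ ha.ne'] at this
  rwa [← div_eq_inv_mul, le_div_iff₀' ha] at this

/-! ### Farkas' lemma (algebraic form) -/

lemma farkas_aux {V : Type*} [AddCommGroup V] [Module ℝ V] {ι : Type*} (S : Finset ι) :
    ∀ (a : ι → V →ₗ[ℝ] ℝ) (f : V →ₗ[ℝ] ℝ),
      (∀ x, (∀ i ∈ S, 0 ≤ a i x) → 0 ≤ f x) →
      ∃ w : ι → ℝ, (∀ i, 0 ≤ w i) ∧ ∀ x, f x = ∑ i ∈ S, w i * a i x := by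
  induction S using Finset.induction_on with
  | empty =>
    intro a f h
    refine ⟨fun _ => 0, fun _ => le_rfl, fun x => ?_⟩
    have h1 := h x (by simp)
    have h2 := h (-x) (by simp)
    rw [map_neg] at h2
    simp; linarith
  | insert j S hj ih =>
    intro a f h
    by_cases hc : ∀ x, (∀ i ∈ S, 0 ≤ a i x) → 0 ≤ f x
    · obtain ⟨w, hw, hf⟩ := ih a f hc
      refine ⟨Function.update w j 0, fun i => ?_, fun x => ?_⟩
      · by_cases hij : i = j
        · subst hij; simp
        · simp [hij, hw]
      · rw [Finset.sum_insert hj, hf x]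
        simp only [Function.update_self, zero_mul, zero_add]
        refine Finset.sum_congr rfl fun i hi => ?_
        have : i ≠ j := fun h => hj (h ▸ hi)
        simp [this]
    · push Not at hc
      obtain ⟨x0, hx0, hfx0⟩ := hc
      have haj : a j x0 < 0 := by
        by_contra! hcon
        have := h x0 (by
          intro i hi
          rcases Finset.mem_insert.1 hi with rfl | hi
          · exact hcon
          · exact hx0 i hi)
        linarith
      set t : ℝ := (-(a j x0))⁻¹ with ht
      have htpos : 0 < t := inv_pos.2 (by linarith)
      have htj : t * a j x0 = -1 := by
        rw [ht, inv_neg, neg_mul, inv_mul_cancel₀ haj.ne]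
      obtain ⟨w, hw, hf⟩ := ih (fun i => a i + (t * a i x0) • a j) (f + (t * f x0) • a j) (by
        intro x hx
        have := h (x + (t * a j x) • x0) (by
          intro i hi
          rcases Finset.mem_insert.1 hi with rfl | hi
          · simp only [map_add, map_smul, smul_eq_mul]
            have : a i x + t * a i x * a i x0 = a i x * (1 + t * a i x0) := by ring
            rw [this, htj]; simp
          · have := hx i hi
            simp only [LinearMap.add_apply, LinearMap.smul_apply, smul_eq_mul, map_add,
              map_smul] at this ⊢
            linarith)
        simp only [LinearMap.add_apply, LinearMap.smul_apply, smul_eq_mul, map_add,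
              map_smul] at this ⊢
        linarith)
      refine ⟨Function.update w j (∑ i ∈ S, w i * (t * a i x0) - t * f x0), fun i => ?_,
        fun x => ?_⟩
      · by_cases hij : i = j
        · subst hij
          simp only [Function.update_self]
          have : 0 ≤ ∑ i ∈ S, w i * (t * a i x0) := Finset.sum_nonneg fun i hi =>
            mul_nonneg (hw i) (mul_nonneg htpos.le (hx0 i hi))
          nlinarith
        · simp [hij, hw]
      · rw [Finset.sum_insert hj]
        have h1 : ∑ i ∈ S, Function.update w j (∑ i ∈ S, w i * (t * a i x0) - t * f x0) i * a i x
            = ∑ i ∈ S, w i * a i x := by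
          refine Finset.sum_congr rfl fun i hi => ?_
          have : i ≠ j := fun h => hj (h ▸ hi)
          simp [this]
        rw [h1]
        have := hf x
        simp only [LinearMap.add_apply, LinearMap.smul_apply, smul_eq_mul, mul_add,
          Finset.sum_add_distrib] at this
        have h2 : ∑ i ∈ S, w i * (t * a i x0 * a j x) = (∑ i ∈ S, w i * (t * a i x0)) * a j x := by
          rw [Finset.sum_mul]; exact Finset.sum_congr rfl fun i _ => by ring
        rw [h2] at this
        simp only [Function.update_self]
        linarith

/-! ### Polyhedral predicates and the polyhedral Lagrangian lemma -/

def IsPolyP {V : Type*} [AddCommGroup V] [Module ℝ V] (P : V → Prop) : Prop :=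
  ∃ (n : Type) (_ : Fintype n) (a : n → V →ₗ[ℝ] ℝ) (b : n → ℝ), ∀ v, P v ↔ ∀ i, a i v ≤ b i

lemma IsPolyP.le {V : Type*} [AddCommGroup V] [Module ℝ V] {g : V → ℝ} (hg : IsLinearMap ℝ g)
    (b : ℝ) : IsPolyP (fun v => g v ≤ b) :=
  ⟨Unit, inferInstance, fun _ => hg.mk' g, fun _ => b, fun v => by simp⟩

lemma IsPolyP.ge {V : Type*} [AddCommGroup V] [Module ℝ V] {g : V → ℝ} (hg : IsLinearMap ℝ g)
    (b : ℝ) : IsPolyP (fun v => b ≤ g v) :=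
  ⟨Unit, inferInstance, fun _ => -hg.mk' g, fun _ => -b, fun v => by simp⟩

lemma IsPolyP.and {V : Type*} [AddCommGroup V] [Module ℝ V] {P Q : V → Prop} (hP : IsPolyP P)
    (hQ : IsPolyP Q) : IsPolyP (fun v => P v ∧ Q v) := by
  obtain ⟨n, _, a, b, h⟩ := hP
  obtain ⟨n', _, a', b', h'⟩ := hQ
  exact ⟨n ⊕ n', inferInstance, Sum.elim a a', Sum.elim b b', fun v => by simp [h, h']⟩

lemma IsPolyP.all {V : Type*} [AddCommGroup V] [Module ℝ V] {κ : Type} [Fintype κ]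
    {P : κ → V → Prop} (hP : ∀ k, IsPolyP (P k)) : IsPolyP (fun v => ∀ k, P k v) := by
  choose n hn a b h using hP
  exact ⟨Σ k, n k, inferInstance, fun i => a i.1 i.2, fun i => b i.1 i.2, fun v => by
    simp [h, Sigma.forall]⟩

lemma poly_lagrange {V : Type*} [AddCommGroup V] [Module ℝ V] {P : V → Prop} (hP : IsPolyP P)
    (hne : ∃ v, P v)
    {κ : Type} [Fintype κ] (g : κ → V →ₗ[ℝ] ℝ) (r : κ → ℝ) (f : V →ₗ[ℝ] ℝ) (opt : ℝ)
    (h : ∀ v, P v → (∀ k, g k v ≤ r k) → opt ≤ f v)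
    (hrec : ∀ v, (∀ v1, P v1 → P (v1 + v)) → (∀ k, g k v ≤ 0) → 0 ≤ f v) :
    ∃ μ : κ → ℝ, (∀ k, 0 ≤ μ k) ∧ ∀ v, P v → opt ≤ f v + ∑ k, μ k * (g k v - r k) := by
  obtain ⟨n, _, a, b, hab⟩ := hP
  let sn : V × ℝ →ₗ[ℝ] ℝ := LinearMap.snd ℝ V ℝ
  let fs : V × ℝ →ₗ[ℝ] V := LinearMap.fst ℝ V ℝ
  let A : (n ⊕ κ) ⊕ Unit → V × ℝ →ₗ[ℝ] ℝ :=
    Sum.elim (Sum.elim (fun i => b i • sn - (a i).comp fs) (fun k => r k • sn - (g k).comp fs))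
      (fun _ => sn)
  obtain ⟨w, hw, hf⟩ := farkas_aux Finset.univ A (f.comp fs - opt • sn) (by
    rintro ⟨v, t⟩ hx
    have h1 : ∀ i, a i v ≤ b i * t := fun i => by
      simpa [A, sn, fs] using hx (Sum.inl (Sum.inl i)) (Finset.mem_univ _)
    have h2 : ∀ k, g k v ≤ r k * t := fun i => by
      simpa [A, sn, fs] using hx (Sum.inl (Sum.inr i)) (Finset.mem_univ _)
    have h3 : 0 ≤ t := by
      simpa [A, sn, fs] using hx (Sum.inr ()) (Finset.mem_univ _)
    suffices opt * t ≤ f v by simpa [sn, fs] using this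
    rcases h3.eq_or_lt with rfl | h3
    · simp only [mul_zero] at *
      refine hrec v (fun v1 hv1 => ?_) h2
      rw [hab] at hv1 ⊢
      intro i
      rw [map_add]
      linarith [hv1 i, h1 i]
    · have := h (t⁻¹ • v) ((hab _).2 fun i => by
        rw [map_smul, smul_eq_mul, ← div_eq_inv_mul, div_le_iff₀ h3]; exact h1 i) (fun k => by
        rw [map_smul, smul_eq_mul, ← div_eq_inv_mul, div_le_iff₀ h3]; exact h2 k)
      rwa [map_smul, smul_eq_mul, ← div_eq_inv_mul, le_div_iff₀ h3] at this)
  refine ⟨fun k => w (Sum.inl (Sum.inr k)), fun k => hw _, fun v hv => ?_⟩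
  have := hf (v, 1)
  simp [A, sn, fs, Fintype.sum_sum_type] at this
  have h1 : 0 ≤ ∑ i, w (Sum.inl (Sum.inl i)) * (b i - a i v) := Finset.sum_nonneg fun i _ =>
    mul_nonneg (hw _) (by linarith [(hab v).1 hv i])
  have h2 := hw (Sum.inr ())
  have h3 : ∑ k, w (Sum.inl (Sum.inr k)) * (g k v - r k)
      = -∑ k, w (Sum.inl (Sum.inr k)) * (r k - g k v) := by
    rw [← Finset.sum_neg_distrib]; exact Finset.sum_congr rfl fun i _ => by ring
  rw [h3]; linarith

/-! ### Minkowski's theorem: polyhedral cones are finitely generated -/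

open scoped NNReal

lemma mink_step {V : Type*} [AddCommGroup V] [Module ℝ V] (S : Set V) (hS : S.Finite)
    (l : V →ₗ[ℝ] ℝ) : ∃ S' : Set V, S'.Finite ∧
      ∀ v, v ∈ Submodule.span ℝ≥0 S' ↔ v ∈ Submodule.span ℝ≥0 S ∧ l v ≤ 0 := by
  let Sm : Set V := {s ∈ S | l s ≤ 0}
  let Sp : Set V := {s ∈ S | 0 < l s}
  let S2 : Set V := (fun z : V × V => l z.1 • z.2 - l z.2 • z.1) '' (Sp ×ˢ Sm)
  have hSm : Sm.Finite := hS.subset (Set.sep_subset _ _)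
  have hSp : Sp.Finite := hS.subset (Set.sep_subset _ _)
  have hl : ∀ (c : ℝ≥0) (v : V), l (c • v) = (c : ℝ) * l v := fun c v => by
    rw [NNReal.smul_def, map_smul, smul_eq_mul]
  refine ⟨Sm ∪ S2, hSm.union ((hSp.prod hSm).image _), fun v => ⟨fun hv => ?_, ?_⟩⟩
  · induction hv using Submodule.span_induction with
    | mem x hx =>
      rcases hx with hx | ⟨⟨s, t⟩, ⟨hs, ht⟩, rfl⟩
      · exact ⟨Submodule.subset_span hx.1, hx.2⟩
      · simp only at hs ht ⊢
        constructor
        · rw [sub_eq_add_neg, ← neg_smul]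
          have h1 : l s • t = (⟨l s, hs.2.le⟩ : ℝ≥0) • t := rfl
          have h2 : (-l t) • s = (⟨-l t, by linarith [ht.2]⟩ : ℝ≥0) • s := rfl
          rw [h1, h2]
          exact add_mem (Submodule.smul_mem _ _ (Submodule.subset_span ht.1))
            (Submodule.smul_mem _ _ (Submodule.subset_span hs.1))
        · rw [map_sub, map_smul, map_smul, smul_eq_mul, smul_eq_mul]; linarith
    | zero => simp
    | add x y _ _ hx hy => exact ⟨add_mem hx.1 hy.1, by rw [map_add]; linarith [hx.2, hy.2]⟩
    | smul c x _ hx =>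
      exact ⟨Submodule.smul_mem _ _ hx.1, by
        rw [hl]; exact mul_nonpos_of_nonneg_of_nonpos c.2 hx.2⟩
  · rintro ⟨hv, hlv⟩
    have hSeq : S = Sm ∪ Sp := by
      ext s
      simp only [Sm, Sp, Set.mem_union, Set.mem_ofPred_eq]
      rcases le_or_gt (l s) 0 with h | h
      · simp [h]
      · simp [h]
    rw [hSeq, Submodule.span_union, Submodule.mem_sup] at hv
    obtain ⟨n, hn, q, hq, rfl⟩ := hv
    have hle : Submodule.span ℝ≥0 Sm ≤ Submodule.span ℝ≥0 (Sm ∪ S2) :=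
      Submodule.span_mono Set.subset_union_left
    have hbil : l q • n - l n • q ∈ Submodule.span ℝ≥0 (Sm ∪ S2) := by
      clear hlv
      induction hq using Submodule.span_induction with
      | mem s hs =>
        induction hn using Submodule.span_induction with
        | mem t ht => exact Submodule.subset_span (Or.inr ⟨(s, t), ⟨hs, ht⟩, rfl⟩)
        | zero => simp
        | add x y _ _ hx hy =>
          have : l s • (x + y) - l (x + y) • s = (l s • x - l x • s) + (l s • y - l y • s) := by
            rw [map_add]; module
          rw [this]; exact add_mem hx hy
        | smul c x _ hx =>
          have : l s • (c • x) - l (c • x) • s = c • (l s • x - l x • s) := by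
            rw [hl]; simp only [NNReal.smul_def]; module
          rw [this]; exact Submodule.smul_mem _ _ hx
      | zero => simp
      | add x y _ _ hx hy =>
        have : l (x + y) • n - l n • (x + y) = (l x • n - l n • x) + (l y • n - l n • y) := by
          rw [map_add]; module
        rw [this]; exact add_mem hx hy
      | smul c x _ hx =>
        have : l (c • x) • n - l n • (c • x) = c • (l x • n - l n • x) := by
          rw [hl]; simp only [NNReal.smul_def]; module
        rw [this]; exact Submodule.smul_mem _ _ hx
    have hq0 : q = 0 ∨ 0 < l q := by
      clear hlv hbil
      induction hq using Submodule.span_induction with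
      | mem s hs => exact Or.inr hs.2
      | zero => exact Or.inl rfl
      | add x y _ _ hx hy =>
        rcases hx with rfl | hx
        · simpa using hy
        · rcases hy with rfl | hy
          · right; simpa using hx
          · right; rw [map_add]; positivity
      | smul c x _ hx =>
        rcases hx with rfl | hx
        · simp
        · rcases eq_or_ne c 0 with rfl | hc
          · simp
          · right; rw [hl]
            have : 0 < (c : ℝ) := NNReal.coe_pos.2 (pos_iff_ne_zero.2 hc)
            positivity
    rcases hq0 with rfl | hq0
    · simpa using hle hn
    · rw [map_add] at hlv
      have hk : 0 < -l n := by linarith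
      have h1 : n + q = (⟨(-l n)⁻¹, (inv_pos.2 hk).le⟩ : ℝ≥0) • (l q • n - l n • q)
          + (⟨1 - (-l n)⁻¹ * l q, by
            rw [sub_nonneg, ← div_eq_inv_mul, div_le_one hk]; linarith⟩ : ℝ≥0) • n := by
        have h2 : (-l n)⁻¹ * (-l n) = 1 := inv_mul_cancel₀ hk.ne'
        have h3 : (-l n)⁻¹ • (l q • n - l n • q) + (1 - (-l n)⁻¹ * l q) • n
          = n + ((-l n)⁻¹ * (-l n)) • q := by module
        rw [h2, one_smul] at h3
        exact h3.symm
      rw [h1]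
      exact add_mem (Submodule.smul_mem _ _ hbil) (Submodule.smul_mem _ _ (hle hn))

instance finite_nnreal_real : Module.Finite ℝ≥0 ℝ := by
  refine ⟨⟨{1, -1}, ?_⟩⟩
  rw [eq_top_iff]
  rintro x -
  rcases le_total 0 x with h | h
  · have : x = (⟨x, h⟩ : ℝ≥0) • (1 : ℝ) := by simp [NNReal.smul_def]
    rw [this]
    exact Submodule.smul_mem _ _ (Submodule.subset_span (by simp))
  · have : x = (⟨-x, by linarith⟩ : ℝ≥0) • (-1 : ℝ) := by simp [NNReal.smul_def]
    rw [this]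
    exact Submodule.smul_mem _ _ (Submodule.subset_span (by simp))

lemma minkowski {V : Type*} [AddCommGroup V] [Module ℝ V] [Module.Finite ℝ≥0 V]
    {ι : Type*} (I : Finset ι) (l : ι → V →ₗ[ℝ] ℝ) :
    ∃ S : Set V, S.Finite ∧ ∀ v, v ∈ Submodule.span ℝ≥0 S ↔ ∀ i ∈ I, l i v ≤ 0 := by
  induction I using Finset.induction_on with
  | empty =>
    obtain ⟨s, hs⟩ := (Module.Finite.fg_top : (⊤ : Submodule ℝ≥0 V).FG)
    exact ⟨s, s.finite_toSet, fun v => by simp [hs]⟩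
  | insert j I _ ih =>
    obtain ⟨S, hS, h⟩ := ih
    obtain ⟨S', hS', h'⟩ := mink_step S hS (l j)
    exact ⟨S', hS', fun v => by rw [h', h, Finset.forall_mem_insert, and_comm]⟩

/-! ### Finitely many scalarizations suffice -/

lemma finite_scalar {d τ : ℕ} {α : ℝ} (hα0 : 0 ≤ α) (hα1 : α < 1)
    (z : Fin τ → Fin d → ℝ)
    (pt : Fin τ → ℝ) (hpt : ∀ i, 0 < pt i) (hpt1 : ∑ i, pt i = 1)
    (F : Finset (Fin d → ℝ)) :
    ∃ (K : ℕ) (c : Fin K → Fin d → ℝ), (∀ k, c k ∈ convexHull ℝ (F : Set (Fin d → ℝ))) ∧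
      ∀ (m : ℕ) (p : Fin m → ℝ), (∀ s, 0 < p s) → ∑ s, p s = 1 → ∀ G : Fin m → Fin d → ℝ,
        (∀ k, CVaR α p (fun s => c k ⬝ᵥ G s) ≤ CVaR α pt (fun i => c k ⬝ᵥ z i)) →
        ∀ c ∈ convexHull ℝ (F : Set (Fin d → ℝ)),
          CVaR α p (fun s => c ⬝ᵥ G s) ≤ CVaR α pt (fun i => c ⬝ᵥ z i) := by
  let cc : (F → ℝ) →ₗ[ℝ] (Fin d → ℝ) := Fintype.linearCombination ℝ (fun f : F => (f : Fin d → ℝ))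
  have hcc : ∀ t, cc t = ∑ f, t f • (f : Fin d → ℝ) := fun t =>
    Fintype.linearCombination_apply _ _ _
  have hlin : ∀ i, IsLinearMap ℝ (fun v : ((F → ℝ) × ℝ × (Fin τ → ℝ)) => cc v.1 ⬝ᵥ z i - v.2.1 - v.2.2 i) := fun i =>
    ⟨fun a b => by simp [add_dotProduct]; ring, fun r a => by simp [smul_dotProduct]; ring⟩
  have hlin1 : ∀ f, IsLinearMap ℝ (fun v : ((F → ℝ) × ℝ × (Fin τ → ℝ)) => - v.1 f) := fun i =>
    ⟨fun a b => by simp; ring, fun r a => by simp⟩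
  have hlin2 : ∀ i, IsLinearMap ℝ (fun v : ((F → ℝ) × ℝ × (Fin τ → ℝ)) => - v.2.2 i) := fun i =>
    ⟨fun a b => by simp; ring, fun r a => by simp⟩
  obtain ⟨S, hS, hmem⟩ := minkowski (V := ((F → ℝ) × ℝ × (Fin τ → ℝ))) Finset.univ
    (Sum.elim (fun f => (hlin1 f).mk' _) (Sum.elim (fun i => (hlin2 i).mk' _)
      (fun i => (hlin i).mk' _)))
  replace hmem : ∀ v : ((F → ℝ) × ℝ × (Fin τ → ℝ)), v ∈ Submodule.span ℝ≥0 S ↔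
      (∀ f, 0 ≤ v.1 f) ∧ (∀ i, 0 ≤ v.2.2 i) ∧ ∀ i, cc v.1 ⬝ᵥ z i - v.2.1 ≤ v.2.2 i := by
    intro v
    rw [hmem]
    simp [Sum.forall]
  let S1 : Set ((F → ℝ) × ℝ × (Fin τ → ℝ)) := {v ∈ S | 0 < ∑ f, v.1 f}
  have hS1 : S1.Finite := hS.subset (Set.sep_subset _ _)
  have : Fintype S1 := hS1.fintype
  let e := Fintype.equivFin S1
  refine ⟨Fintype.card S1, fun k => (∑ f, (e.symm k).1.1 f)⁻¹ • cc (e.symm k).1.1,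
    fun k => ?_, ?_⟩
  · beta_reduce
    generalize e.symm k = v'
    obtain ⟨v, hvS, hv⟩ := v'
    have hm := ((hmem v).1 (Submodule.subset_span hvS)).1
    rw [hcc, Finset.smul_sum]
    simp only [smul_smul]
    refine (convex_convexHull ℝ _).sum_mem (fun f _ => ?_) ?_ (fun f _ => ?_)
    · exact mul_nonneg (inv_nonneg.2 hv.le) (hm f)
    · rw [← Finset.mul_sum, inv_mul_cancel₀ hv.ne']
    · exact subset_convexHull ℝ _ f.2
  · intro m p hp hp1 G hk c hc
    have key : ∀ v ∈ S, CVaR α p (fun s => cc v.1 ⬝ᵥ G s) ≤ CVaR α pt (fun i => cc v.1 ⬝ᵥ z i) := by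
      intro v hv
      have hm := ((hmem v).1 (Submodule.subset_span hv)).1
      rcases (Finset.sum_nonneg fun f _ => hm f : 0 ≤ ∑ f, v.1 f).eq_or_lt with h0 | hpos
      · have : v.1 = 0 := by
          funext f
          exact (Finset.sum_eq_zero_iff_of_nonneg fun f _ => hm f).1 h0.symm f (Finset.mem_univ _)
        rw [this]
        simp [cvar_zero hα0 hα1 hp hp1, cvar_zero hα0 hα1 hpt hpt1]
      · have := hk (e ⟨v, hv, hpos⟩)
        simp only [Equiv.symm_apply_apply, smul_dotProduct, smul_eq_mul] at this
        rw [cvar_smul hα0 hα1 hp hp1 _ (inv_pos.2 hpos),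
          cvar_smul hα0 hα1 hpt hpt1 _ (inv_pos.2 hpos)] at this
        exact le_of_mul_le_mul_left this (inv_pos.2 hpos)
    have key2 : ∀ v ∈ Submodule.span ℝ≥0 S, CVaR α p (fun s => cc v.1 ⬝ᵥ G s) ≤
        v.2.1 + (1 - α)⁻¹ * ∑ i, pt i * v.2.2 i := by
      intro v hv
      induction hv using Submodule.span_induction with
      | mem v hv =>
        have hm := (hmem v).1 (Submodule.subset_span hv)
        exact (key v hv).trans (cvar_le_of hα0 hα1 hpt hpt1 _ _ _ hm.2.1 hm.2.2)
      | zero => simp [cvar_zero hα0 hα1 hp hp1]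
      | add x y _ _ hx hy =>
        have := cvar_add hα0 hα1 hp hp1 (fun s => cc x.1 ⬝ᵥ G s) (fun s => cc y.1 ⬝ᵥ G s)
        simp only [Prod.fst_add, map_add, add_dotProduct, Prod.snd_add, Pi.add_apply, mul_add,
          Finset.sum_add_distrib]
        linarith
      | smul a x _ hx =>
        have := cvar_smul_le hα0 hα1 hp hp1 a a.2 (fun s => cc x.1 ⬝ᵥ G s)
        have h2 := mul_le_mul_of_nonneg_left hx a.2
        have h3 : a • x = (a : ℝ) • x := rfl
        have h4 : ∑ i, pt i * ((a : ℝ) * x.2.2 i) = a * ∑ i, pt i * x.2.2 i := by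
          rw [Finset.mul_sum]; exact Finset.sum_congr rfl fun s _ => by ring
        rw [h3]
        simp only [Prod.smul_fst, map_smul, smul_dotProduct, Prod.smul_snd, Pi.smul_apply,
          smul_eq_mul, h4]
        refine this.trans (h2.trans (le_of_eq ?_))
        simp only [NNReal.val_eq_coe]
        ring
    obtain ⟨t, ht0, ht1, htc⟩ : ∃ t : F → ℝ, (∀ f, 0 ≤ t f) ∧ ∑ f, t f = 1 ∧ cc t = c := by
      obtain ⟨w, hw0, hw1, hwc⟩ := Finset.mem_convexHull'.1 hc
      refine ⟨fun f => w f, fun f => hw0 f f.2, ?_, ?_⟩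
      · rw [← hw1, ← Finset.sum_coe_sort F]
      · rw [hcc, ← hwc, ← Finset.sum_coe_sort F]
    apply le_cvar
    intro η
    have := key2 (t, η, fun i => max (c ⬝ᵥ z i - η) 0) ((hmem _).2
      ⟨ht0, fun i => le_max_right _ _, fun i => by simp only [htc]; exact le_max_left _ _⟩)
    simpa only [htc] using this

/-- Theorem A.2, strong Lagrangian duality: if the joint
feasible region is nonempty and compact and (LinearP) has an optimal solution
`(xstar, ystar)`, then the Lagrangian dual has an optimal solution `μ*` whose
dual value equals the optimal value of (LinearP). -/
theorem strong_lagrangian_duality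
    (m m1 m2 n1 n2 d τ : ℕ)
    (p : Fin m → ℝ) (hp : ∀ s, 0 < p s) (hp1 : ∑ s, p s = 1)
    (α : ℝ) (hα0 : 0 ≤ α) (hα1 : α < 1)
    (A : Matrix (Fin m1) (Fin n1) ℝ) (b : Fin m1 → ℝ) (fv : Fin n1 → ℝ)
    (Tm : Fin m → Matrix (Fin m2) (Fin n1) ℝ)
    (Wm : Fin m → Matrix (Fin m2) (Fin n2) ℝ)
    (q : Fin m → Fin n2 → ℝ) (hvec : Fin m → Fin m2 → ℝ)
    (gbar : Fin m → Matrix (Fin d) (Fin n1) ℝ)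
    (gtil : Fin m → Matrix (Fin d) (Fin n2) ℝ)
    (z : Fin τ → Fin d → ℝ)
    (pt : Fin τ → ℝ) (hpt : ∀ i, 0 < pt i) (hpt1 : ∑ i, pt i = 1)
    (C : Set (Fin d → ℝ)) (hCsub : C ⊆ {c | (∀ i, 0 ≤ c i) ∧ ∑ i, c i = 1})
    (hCpoly : ∃ F : Finset (Fin d → ℝ), C = convexHull ℝ (F : Set (Fin d → ℝ)))
    (hne : ∃ x y, InXY A b Tm Wm hvec x y)
    (hcpt : IsCompact {v : (Fin n1 → ℝ) × (Fin m → Fin n2 → ℝ) |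
      InXY A b Tm Wm hvec v.1 v.2})
    (xstar : Fin n1 → ℝ) (ystar : Fin m → Fin n2 → ℝ)
    (hPstar : PrimalFeas α p A b Tm Wm hvec gbar gtil z pt C xstar ystar)
    (hopt : ∀ x y, PrimalFeas α p A b Tm Wm hvec gbar gtil z pt C x y →
      PrimalObj p fv q xstar ystar ≤ PrimalObj p fv q x y) :
    ∃ (K : ℕ) (c : Fin K → Fin d → ℝ) (mw : Fin K → ℝ),
      (∀ k, c k ∈ C) ∧ (∀ k, 0 ≤ mw k) ∧
      -- the dual value of μ* equals the primal optimal value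
      IsGLB {v : ℝ | ∃ x y, InXY A b Tm Wm hvec x y ∧
          v = Lagr α p fv q gbar gtil z pt c mw x y}
        (PrimalObj p fv q xstar ystar) ∧
      -- μ* is optimal for the Lagrangian dual
      ∀ (K' : ℕ) (c' : Fin K' → Fin d → ℝ) (mw' : Fin K' → ℝ),
        (∀ k, c' k ∈ C) → (∀ k, 0 ≤ mw' k) →
        ∀ dv : ℝ,
          (∀ v ∈ {v : ℝ | ∃ x y, InXY A b Tm Wm hvec x y ∧
              v = Lagr α p fv q gbar gtil z pt c' mw' x y}, dv ≤ v) →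
          dv ≤ PrimalObj p fv q xstar ystar := by
  obtain ⟨F, rfl⟩ := hCpoly
  obtain ⟨K, c, hcC, hfin⟩ := finite_scalar hα0 hα1 z pt hpt hpt1 F
  -- weak duality
  have weak : ∀ (K' : ℕ) (c' : Fin K' → Fin d → ℝ) (mw' : Fin K' → ℝ),
      (∀ k, c' k ∈ convexHull ℝ (F : Set (Fin d → ℝ))) → (∀ k, 0 ≤ mw' k) →
      Lagr α p fv q gbar gtil z pt c' mw' xstar ystar ≤ PrimalObj p fv q xstar ystar := by
    intro K' c' mw' hc' hmw'
    have : ∑ k, mw' k * CVaR α p (fun s => c' k ⬝ᵥ Ghat gbar gtil xstar ystar s)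
        ≤ ∑ k, mw' k * CVaR α pt (fun i => c' k ⬝ᵥ z i) :=
      Finset.sum_le_sum fun k _ => mul_le_mul_of_nonneg_left (hPstar.2 _ (hc' k)) (hmw' k)
    unfold Lagr; linarith
  let P : ((Fin n1 → ℝ) × (Fin m → Fin n2 → ℝ) × (Fin K → ℝ) × (Fin K → Fin m → ℝ)) → Prop := fun v => InXY A b Tm Wm hvec v.1 v.2.1 ∧
    ∀ k s, 0 ≤ v.2.2.2 k s ∧ c k ⬝ᵥ Ghat gbar gtil v.1 v.2.1 s - v.2.2.1 k - v.2.2.2 k s ≤ 0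
  have hP : IsPolyP P := by
    refine IsPolyP.and (IsPolyP.and (IsPolyP.all fun i => IsPolyP.ge ?_ _)
      (IsPolyP.and (IsPolyP.all fun i => IsPolyP.le ?_ _) (IsPolyP.all fun s =>
        IsPolyP.and (IsPolyP.all fun j => IsPolyP.ge ?_ _)
          (IsPolyP.all fun i => IsPolyP.ge ?_ _))))
      (IsPolyP.all fun k => IsPolyP.all fun s => IsPolyP.and (IsPolyP.ge ?_ _) (IsPolyP.le ?_ _))
    · exact ⟨fun a b => by simp, fun r a => by simp⟩
    · exact ⟨fun a b => by simp [mulVec_add], fun r a => by simp [mulVec_smul]⟩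
    · exact ⟨fun a b => by simp, fun r a => by simp⟩
    · exact ⟨fun a b => by simp [mulVec_add]; ring, fun r a => by simp [mulVec_smul]; ring⟩
    · exact ⟨fun a b => by simp, fun r a => by simp⟩
    · exact ⟨fun a b => by simp [Ghat, mulVec_add, dotProduct_add]; ring,
        fun r a => by simp [Ghat, mulVec_smul, dotProduct_add, dotProduct_smul]; ring⟩
  have hg : ∀ k : Fin K, IsLinearMap ℝ (fun v : ((Fin n1 → ℝ) × (Fin m → Fin n2 → ℝ) × (Fin K → ℝ) × (Fin K → Fin m → ℝ)) =>
      v.2.2.1 k + (1 - α)⁻¹ * ∑ s, p s * v.2.2.2 k s) := fun k =>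
    ⟨fun a b => by simp [mul_add, Finset.sum_add_distrib]; ring, fun r a => by
      have : ∑ s, p s * (r * a.2.2.2 k s) = r * ∑ s, p s * a.2.2.2 k s := by
        rw [Finset.mul_sum]; exact Finset.sum_congr rfl fun s _ => by ring
      simp [this]; ring⟩
  have hf : IsLinearMap ℝ (fun v : ((Fin n1 → ℝ) × (Fin m → Fin n2 → ℝ) × (Fin K → ℝ) × (Fin K → Fin m → ℝ)) => PrimalObj p fv q v.1 v.2.1) :=
    ⟨fun a b => by
      simp [PrimalObj, dotProduct_add, mul_add, Finset.sum_add_distrib]; ring, fun r a => by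
      have : ∑ s, p s * (r * (q s ⬝ᵥ a.2.1 s)) = r * ∑ s, p s * (q s ⬝ᵥ a.2.1 s) := by
        rw [Finset.mul_sum]; exact Finset.sum_congr rfl fun s _ => by ring
      simp [PrimalObj, dotProduct_smul, this]; ring⟩
  have hPc : ∀ v, P v → ∀ k, CVaR α p (fun s => c k ⬝ᵥ Ghat gbar gtil v.1 v.2.1 s) ≤
      v.2.2.1 k + (1 - α)⁻¹ * ∑ s, p s * v.2.2.2 k s := fun v hv k =>
    cvar_le_of hα0 hα1 hp hp1 _ _ _ (fun s => (hv.2 k s).1)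
      (fun s => by linarith [(hv.2 k s).2])
  -- a member of `P` from a choice of `η`
  have hPmem : ∀ x y, InXY A b Tm Wm hvec x y → ∀ η : Fin K → ℝ,
      P (x, y, η, fun k s => max (c k ⬝ᵥ Ghat gbar gtil x y s - η k) 0) := fun x y hxy η =>
    ⟨hxy, fun k s => ⟨le_max_right _ _, by
      have := le_max_left (c k ⬝ᵥ Ghat gbar gtil x y s - η k) 0
      simp only; linarith⟩⟩
  obtain ⟨μ, hμ0, hμ⟩ := poly_lagrange hP ⟨_, hPmem _ _ hPstar.1 0⟩
    (fun k => (hg k).mk' _) (fun k => CVaR α pt (fun i => c k ⬝ᵥ z i)) (hf.mk' _)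
    (PrimalObj p fv q xstar ystar)
    (by
      intro v hv hk
      refine hopt _ _ ⟨hv.1, hfin m p hp hp1 _ fun k => (hPc v hv k).trans (hk k)⟩)
    (by
      intro v hv hk
      have h1 : PrimalFeas α p A b Tm Wm hvec gbar gtil z pt (convexHull ℝ (F : Set (Fin d → ℝ)))
          (xstar + v.1) (ystar + v.2.1) := by
        refine ⟨(hv _ (hPmem _ _ hPstar.1 0)).1, hfin m p hp hp1 _ fun k => ?_⟩
        refine le_trans ?_ (hPstar.2 _ (hcC k))
        apply le_cvar
        intro η
        have h2 := hPc _ (hv _ (hPmem _ _ hPstar.1 (fun _ => η))) k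
        have h3 := (hg k).map_add
          ((xstar, ystar, (fun _ => η), fun k s =>
            max (c k ⬝ᵥ Ghat gbar gtil xstar ystar s - η) 0) : ((Fin n1 → ℝ) × (Fin m → Fin n2 → ℝ) × (Fin K → ℝ) × (Fin K → Fin m → ℝ))) v
        have h4 := hk k
        simp only [IsLinearMap.mk'_apply] at h4
        refine h2.trans ?_
        refine h3.le.trans ?_
        simp only
        linarith
      have h2 := hopt _ _ h1
      have h3 := hf.map_add ((xstar, ystar, 0, 0) : ((Fin n1 → ℝ) × (Fin m → Fin n2 → ℝ) × (Fin K → ℝ) × (Fin K → Fin m → ℝ))) v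
      simp only [Prod.fst_add, Prod.snd_add] at h3
      simp only [IsLinearMap.mk'_apply]
      linarith)
  have lower : ∀ x y, InXY A b Tm Wm hvec x y →
      PrimalObj p fv q xstar ystar ≤ Lagr α p fv q gbar gtil z pt c μ x y := by
    intro x y hxy
    have hM : 0 ≤ ∑ k, μ k := Finset.sum_nonneg fun k _ => hμ0 k
    apply le_of_forall_pos_le_add
    intro ε hε
    have hδ : 0 < ε / (∑ k, μ k + 1) := by positivity
    choose η hη using fun k => exists_lt_cvar (α := α) (p := p)
      (v := fun s => c k ⬝ᵥ Ghat gbar gtil x y s) hδ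
    have h1 := hμ _ (hPmem x y hxy η)
    simp only [IsLinearMap.mk'_apply] at h1
    have h2 : ∑ k, μ k * (η k + (1 - α)⁻¹ * ∑ s, p s *
          max (c k ⬝ᵥ Ghat gbar gtil x y s - η k) 0 - CVaR α pt (fun i => c k ⬝ᵥ z i))
        ≤ ∑ k, μ k * (CVaR α p (fun s => c k ⬝ᵥ Ghat gbar gtil x y s)
          + ε / (∑ k, μ k + 1) - CVaR α pt (fun i => c k ⬝ᵥ z i)) :=
      Finset.sum_le_sum fun k _ => mul_le_mul_of_nonneg_left (by linarith [hη k]) (hμ0 k)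
    simp only [mul_add, mul_sub, Finset.sum_add_distrib, Finset.sum_sub_distrib,
      ← Finset.sum_mul] at h1 h2
    have h3 : (∑ k, μ k) * (ε / (∑ k, μ k + 1)) ≤ ε := by
      rw [mul_div_assoc', div_le_iff₀ (by positivity)]
      nlinarith
    unfold Lagr
    linarith
  refine ⟨K, c, μ, hcC, hμ0, ⟨?_, ?_⟩, ?_⟩
  · rintro _ ⟨x, y, hxy, rfl⟩
    exact lower x y hxy
  · intro w hw
    exact (hw ⟨xstar, ystar, hPstar.1, rfl⟩).trans (weak K c μ hcC hμ0)
  · intro K' c' mw' hc' hmw' dv hdv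
    exact (hdv _ ⟨xstar, ystar, hPstar.1, rfl⟩).trans (weak K' c' mw' hc' hmw')
end
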